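/- arXiv:1403.5353 — 2 statements merged into one kernel-verified Lean document; each statement's English description precedes it below -/
import Mathlib

section
/- Let χ ∈ C_c^∞(ℝ) be supported in an interval of length c₁/12. There exists a constant B > 0, depending only on ρ, χ, A, N, C₁ and c₁, with the following property. Let Q ∈ C^N([1/4,4]) be real-valued with |Q^{(j)}(t)| ≤ C₁ for all 0 ≤ j ≤ N and |Q″(t)| ≥ c₁ for all t ∈ [1/4,4]. Then at least one of the following two statements holds: (1) |χ(−ξ/η) I_Q(λ,ξ,η)| ≤ B λ^{−(N−1)} for all λ > 1, ξ ∈ ℝ and η ≠ 0; (2) for every pair (ξ,η) with η ≠ 0 and −ξ/η ∈ supp χ there exists a unique t(ξ,η) ∈ [1/3, 13/6] with Q′(t(ξ,η)) = −ξ/η, the map (ξ,η) ↦ t(ξ,η) is (N−1) times continuously differentiable on {(ξ,η) : η ≠ 0, −ξ/η ∈ supp χ}, and, with c = e^{i·sgn(Q″)·π/4} (2π)^{1/2} (sgn(Q″) being the constant sign of Q″ on [1/4,4]), for all λ > 1 and all such (ξ,η): |χ(−ξ/η) I_Q(λ,ξ,η) − c · χ(−ξ/η) · 1_{[−A,A]}(ξ/η)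 · ρ(t(ξ,η)) · |Q″(t(ξ,η))|^{−1/2} · e^{iλφ_Q(t(ξ,η),ξ,η)} · λ^{−1/2}| ≤ B λ^{−3/2}. -/
open MeasureTheory Real Set

noncomputable section

/-- The phase `φ_Q(t,ξ,η) = Q(t) + (ξ/η) t`. -/
def phaseQ (Q : ℝ → ℝ) (t ξ η : ℝ) : ℝ := Q t + (ξ / η) * t

/-- `I_Q(λ,ξ,η) = 1_{[-A,A]}(ξ/η) ∫_0^∞ ρ(t) e^{iλφ_Q(t,ξ,η)} dt`. -/
def oscI (ρ Q : ℝ → ℝ) (A lam ξ η : ℝ) : ℂ :=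
  Set.indicator (Set.Icc (-A) A) (fun _ => (1 : ℂ)) (ξ / η) *
    ∫ t in Set.Ioi (0 : ℝ), (ρ t : ℂ) * Complex.exp (Complex.I * lam * phaseQ Q t ξ η)

/-- A family of real functions is uniformly bounded on `Ω`. -/
def UnifBdd {ι : Type*} (Ω : Set ℝ) (F : ι → ℝ → ℝ) : Prop :=
  ∃ M : ℝ, ∀ i, ∀ t ∈ Ω, |F i t| ≤ M

/-- A family of real functions is `n` times continuously differentiable on `Ω`, with derivatives
up to order `n` bounded uniformly over the family. -/
def UnifCk {ι : Type*} (Ω : Set ℝ) : ℕ → (ι → ℝ → ℝ) → Prop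
  | 0, F => UnifBdd Ω F ∧ ∀ i, ContinuousOn (F i) Ω
  | n + 1, F => UnifBdd Ω F ∧
      ∃ F' : ι → ℝ → ℝ, (∀ i, ∀ t ∈ Ω, HasDerivAt (F i) (F' i t) t) ∧ UnifCk Ω n F'

section UnifCk

variable {ι : Type*} {Ω : Set ℝ} {F G : ι → ℝ → ℝ} {n : ℕ}

lemma UnifBdd.exists_nonneg (h : UnifBdd Ω F) : ∃ M : ℝ, 0 ≤ M ∧ ∀ i, ∀ t ∈ Ω, |F i t| ≤ M := by
  obtain ⟨M, hM⟩ := h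
  exact ⟨|M|, abs_nonneg M, fun i t ht => (hM i t ht).trans (le_abs_self M)⟩

lemma UnifBdd.add (hF : UnifBdd Ω F) (hG : UnifBdd Ω G) :
    UnifBdd Ω (fun i t => F i t + G i t) := by
  obtain ⟨M, hM⟩ := hF
  obtain ⟨K, hK⟩ := hG
  exact ⟨M + K, fun i t ht => (abs_add_le _ _).trans (add_le_add (hM i t ht) (hK i t ht))⟩

lemma UnifBdd.mul (hF : UnifBdd Ω F) (hG : UnifBdd Ω G) :
    UnifBdd Ω (fun i t => F i t * G i t) := by
  obtain ⟨M, hM0, hM⟩ := hF.exists_nonneg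
  obtain ⟨K, hK⟩ := hG
  refine ⟨M * K, fun i t ht => ?_⟩
  rw [abs_mul]
  exact mul_le_mul (hM i t ht) (hK i t ht) (abs_nonneg _) hM0

lemma UnifCk.unifBdd (h : UnifCk Ω n F) : UnifBdd Ω F := by
  cases n <;> exact h.1

lemma UnifCk.continuousOn (h : UnifCk Ω n F) (i : ι) : ContinuousOn (F i) Ω := by
  cases n with
  | zero => exact h.2 i
  | succ n =>
    obtain ⟨-, F', hF', -⟩ := h
    exact fun t ht => (hF' i t ht).continuousAt.continuousWithinAt

lemma UnifCk.of_succ (h : UnifCk Ω (n + 1) F) : UnifCk Ω n F := by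
  induction n generalizing F with
  | zero => exact ⟨h.unifBdd, h.continuousOn⟩
  | succ n ih =>
    obtain ⟨hb, F', hF', h'⟩ := h
    exact ⟨hb, F', hF', ih h'⟩

lemma UnifCk.of_le {k : ℕ} (h : UnifCk Ω n F) (hk : k ≤ n) : UnifCk Ω k F := by
  induction hk with
  | refl => exact h
  | step _ ih => exact ih h.of_succ

lemma UnifCk.mono {Ω' : Set ℝ} (h : UnifCk Ω n F) (hΩ : Ω' ⊆ Ω) : UnifCk Ω' n F := by
  induction n generalizing F with
  | zero =>
    obtain ⟨⟨M, hM⟩, hc⟩ := h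
    exact ⟨⟨M, fun i t ht => hM i t (hΩ ht)⟩, fun i => (hc i).mono hΩ⟩
  | succ n ih =>
    obtain ⟨⟨M, hM⟩, F', hF', h'⟩ := h
    exact ⟨⟨M, fun i t ht => hM i t (hΩ ht)⟩, F', fun i t ht => hF' i t (hΩ ht), ih h'⟩

lemma UnifCk.const {c : ι → ℝ} {M : ℝ} (hc : ∀ i, |c i| ≤ M) :
    UnifCk Ω n (fun i _ => c i) := by
  induction n generalizing c M with
  | zero => exact ⟨⟨M, fun i _ _ => hc i⟩, fun i => continuousOn_const⟩
  | succ n ih =>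
    exact ⟨⟨M, fun i _ _ => hc i⟩, fun _ _ => 0, fun i t _ => hasDerivAt_const t (c i),
      ih (c := fun _ => 0) (M := 0) (fun i => by simp)⟩

lemma UnifCk.add (hF : UnifCk Ω n F) (hG : UnifCk Ω n G) :
    UnifCk Ω n (fun i t => F i t + G i t) := by
  induction n generalizing F G with
  | zero => exact ⟨hF.1.add hG.1, fun i => (hF.2 i).add (hG.2 i)⟩
  | succ n ih =>
    obtain ⟨hFb, F', hF', hF''⟩ := hF
    obtain ⟨hGb, G', hG', hG''⟩ := hG
    exact ⟨hFb.add hGb, _, fun i t ht => (hF' i t ht).add (hG' i t ht), ih hF'' hG''⟩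

lemma UnifCk.mul (hF : UnifCk Ω n F) (hG : UnifCk Ω n G) :
    UnifCk Ω n (fun i t => F i t * G i t) := by
  induction n generalizing F G with
  | zero => exact ⟨hF.1.mul hG.1, fun i => (hF.2 i).mul (hG.2 i)⟩
  | succ n ih =>
    have hF₀ := hF.of_succ
    have hG₀ := hG.of_succ
    obtain ⟨hFb, F', hF', hF''⟩ := hF
    obtain ⟨hGb, G', hG', hG''⟩ := hG
    exact ⟨hFb.mul hGb, _, fun i t ht => (hF' i t ht).mul (hG' i t ht),
      (ih hF'' hG₀).add (ih hF₀ hG'')⟩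

lemma UnifCk.inv {c : ℝ} (hc : 0 < c) (hF : UnifCk Ω n F) (hlow : ∀ i, ∀ t ∈ Ω, c ≤ |F i t|) :
    UnifCk Ω n (fun i t => (F i t)⁻¹) := by
  have hne : ∀ i, ∀ t ∈ Ω, F i t ≠ 0 := fun i t ht =>
    abs_pos.1 (hc.trans_le (hlow i t ht))
  have hb : UnifBdd Ω (fun i t => (F i t)⁻¹) :=
    ⟨c⁻¹, fun i t ht => by rw [abs_inv]; exact inv_anti₀ hc (hlow i t ht)⟩
  induction n with
  | zero => exact ⟨hb, fun i => (hF.2 i).inv₀ (hne i)⟩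
  | succ n ih =>
    have hinv := ih hF.of_succ
    obtain ⟨-, F', hF', hF''⟩ := hF
    refine ⟨hb, fun i t => (-1) * (F' i t * ((F i t)⁻¹ * (F i t)⁻¹)), fun i t ht => ?_,
      (UnifCk.const (M := 1) (fun i => by simp)).mul (hF''.mul (hinv.mul hinv))⟩
    refine ((hF' i t ht).inv (hne i t ht)).congr_deriv ?_
    simp only [div_eq_mul_inv, pow_two, mul_inv]
    ring

/-- The weighted average of `f` over the segment from `T` to `t`. -/
def segAvg (w f : ℝ → ℝ) (T t : ℝ) : ℝ := ∫ θ in (0 : ℝ)..1, w θ * f (T + θ * (t - T))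

lemma segment_mem (hΩc : Convex ℝ Ω) {T t θ : ℝ} (hT : T ∈ Ω) (ht : t ∈ Ω)
    (hθ : θ ∈ Icc (0 : ℝ) 1) : T + θ * (t - T) ∈ Ω := by
  have := hΩc.add_smul_sub_mem hT ht hθ
  simpa [smul_eq_mul] using this

lemma continuousOn_segAvg_integrand (hΩc : Convex ℝ Ω) {w f : ℝ → ℝ} (hw : Continuous w)
    (hf : ContinuousOn f Ω) {T t : ℝ} (hT : T ∈ Ω) (ht : t ∈ Ω) :
    ContinuousOn (fun θ => w θ * f (T + θ * (t - T))) (Icc 0 1) :=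
  hw.continuousOn.mul (hf.comp (by fun_prop) (fun _ hθ => segment_mem hΩc hT ht hθ))

lemma abs_segAvg_le (hΩc : Convex ℝ Ω) {w f : ℝ → ℝ} {T t K M : ℝ}
    (hK : ∀ θ ∈ Icc (0 : ℝ) 1, |w θ| ≤ K) (hK0 : 0 ≤ K) (hM : ∀ t ∈ Ω, |f t| ≤ M)
    (hT : T ∈ Ω) (ht : t ∈ Ω) : |segAvg w f T t| ≤ K * M := by
  have := intervalIntegral.norm_integral_le_of_norm_le_const (a := 0) (b := 1) (C := K * M)
    (f := fun θ => w θ * f (T + θ * (t - T))) (fun θ hθ => by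
      rw [uIoc_of_le zero_le_one] at hθ
      have hθ' := Ioc_subset_Icc_self hθ
      rw [norm_mul]
      exact mul_le_mul (hK θ hθ') (hM _ (segment_mem hΩc hT ht hθ')) (abs_nonneg _) hK0)
  simpa [segAvg] using this

lemma hasDerivAt_segAvg (hΩ : IsOpen Ω) (hΩc : Convex ℝ Ω) {w f f' : ℝ → ℝ} (hw : Continuous w)
    (hf : ∀ t ∈ Ω, HasDerivAt f (f' t) t) (hf' : ContinuousOn f' Ω) {M : ℝ}
    (hM : ∀ t ∈ Ω, |f' t| ≤ M) {T t : ℝ} (hT : T ∈ Ω) (ht : t ∈ Ω) :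
    HasDerivAt (segAvg w f T) (segAvg (fun θ => w θ * θ) f' T t) t := by
  have hfc : ContinuousOn f Ω := fun t ht => (hf t ht).continuousAt.continuousWithinAt
  obtain ⟨K, hK⟩ := isCompact_Icc.exists_bound_of_continuousOn (s := Icc (0 : ℝ) 1)
    (hw.mul continuous_id).continuousOn
  have hmeas : ∀ {v g : ℝ → ℝ}, Continuous v → ContinuousOn g Ω → ∀ {x}, x ∈ Ω →
      IntervalIntegrable (fun θ => v θ * g (T + θ * (x - T))) volume 0 1 := by
    intro v g hv hg x hx
    refine ContinuousOn.intervalIntegrable ?_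
    rw [uIcc_of_le zero_le_one]
    exact continuousOn_segAvg_integrand hΩc hv hg hT hx
  refine (intervalIntegral.hasDerivAt_integral_of_dominated_loc_of_deriv_le (μ := volume)
    (F := fun x θ => w θ * f (T + θ * (x - T)))
    (F' := fun x θ => w θ * θ * f' (T + θ * (x - T))) (bound := fun _ => K * M)
    (hΩ.mem_nhds ht) ?_ (hmeas hw hfc ht) ?_ ?_ ?_ ?_).2
  · filter_upwards [hΩ.mem_nhds ht] with x hx
    exact (hmeas hw hfc hx).def'.aestronglyMeasurable
  · exact (hmeas (hw.mul continuous_id) hf' ht).def'.aestronglyMeasurable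
  · refine Filter.Eventually.of_forall fun θ hθ x hx => ?_
    rw [uIoc_of_le zero_le_one] at hθ
    have hθ' := Ioc_subset_Icc_self hθ
    rw [norm_mul]
    exact mul_le_mul (hK θ hθ') (hM _ (segment_mem hΩc hT hx hθ')) (abs_nonneg _)
      ((norm_nonneg _).trans (hK θ hθ'))
  · exact intervalIntegrable_const
  · refine Filter.Eventually.of_forall fun θ hθ x hx => ?_
    rw [uIoc_of_le zero_le_one] at hθ
    have hθ' := Ioc_subset_Icc_self hθ
    have h1 : HasDerivAt (fun x => T + θ * (x - T)) θ x := by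
      simpa using (((hasDerivAt_id x).sub_const T).const_mul θ).const_add T
    have h2 := ((hf _ (segment_mem hΩc hT hx hθ')).comp x h1).const_mul (w θ)
    exact h2.congr_deriv (by ring)

lemma continuousOn_segAvg (hΩ : IsOpen Ω) (hΩc : Convex ℝ Ω) {w f : ℝ → ℝ} (hw : Continuous w)
    (hf : ContinuousOn f Ω) {M : ℝ} (hM : ∀ t ∈ Ω, |f t| ≤ M) {T : ℝ} (hT : T ∈ Ω) :
    ContinuousOn (segAvg w f T) Ω := by
  intro t ht
  refine ContinuousAt.continuousWithinAt ?_
  obtain ⟨K, hK⟩ := isCompact_Icc.exists_bound_of_continuousOn (s := Icc (0 : ℝ) 1)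
    hw.continuousOn
  refine intervalIntegral.continuousAt_of_dominated_interval
    (F := fun x θ => w θ * f (T + θ * (x - T))) (bound := fun _ => K * M) ?_ ?_
    intervalIntegrable_const ?_
  · filter_upwards [hΩ.mem_nhds ht] with x hx
    refine (ContinuousOn.intervalIntegrable ?_).def'.aestronglyMeasurable
    rw [uIcc_of_le zero_le_one]
    exact continuousOn_segAvg_integrand hΩc hw hf hT hx
  · filter_upwards [hΩ.mem_nhds ht] with x hx
    refine Filter.Eventually.of_forall fun θ hθ => ?_
    rw [uIoc_of_le zero_le_one] at hθ
    have hθ' := Ioc_subset_Icc_self hθ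
    rw [norm_mul]
    exact mul_le_mul (hK θ hθ') (hM _ (segment_mem hΩc hT hx hθ')) (abs_nonneg _)
      ((norm_nonneg _).trans (hK θ hθ'))
  · refine Filter.Eventually.of_forall fun θ hθ => ?_
    rw [uIoc_of_le zero_le_one] at hθ
    have hmem := segment_mem hΩc hT ht (Ioc_subset_Icc_self hθ)
    refine continuousAt_const.mul (ContinuousAt.comp (x := t)
      (f := fun x => T + θ * (x - T)) ?_ (by fun_prop))
    exact hf.continuousAt (hΩ.mem_nhds hmem)

lemma UnifCk.segAvg (hΩ : IsOpen Ω) (hΩc : Convex ℝ Ω) {T : ι → ℝ} (hT : ∀ i, T i ∈ Ω)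
    (hF : UnifCk Ω n F) {w : ℝ → ℝ} (hw : Continuous w) :
    UnifCk Ω n (fun i => segAvg w (F i) (T i)) := by
  have hb : UnifBdd Ω (fun i => _root_.segAvg w (F i) (T i)) := by
    obtain ⟨M, hM⟩ := hF.unifBdd
    obtain ⟨K, hK⟩ := isCompact_Icc.exists_bound_of_continuousOn (s := Icc (0 : ℝ) 1)
      hw.continuousOn
    exact ⟨K * M, fun i t ht => abs_segAvg_le hΩc hK
      ((norm_nonneg _).trans (hK 0 (by simp))) (hM i) (hT i) ht⟩
  induction n generalizing F w with
  | zero =>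
    obtain ⟨M, hM⟩ := hF.1
    exact ⟨hb, fun i => continuousOn_segAvg hΩ hΩc hw (hF.2 i) (hM i) (hT i)⟩
  | succ n ih =>
    obtain ⟨-, F', hF', hF''⟩ := hF
    obtain ⟨M, hM⟩ := hF''.unifBdd
    have hw' : Continuous fun θ => w θ * θ := hw.mul continuous_id
    refine ⟨hb, _, fun i t ht => hasDerivAt_segAvg hΩ hΩc hw (hF' i) (hF''.continuousOn i)
      (hM i) (hT i) ht, ih hF'' hw' ?_⟩
    obtain ⟨K, hK⟩ := isCompact_Icc.exists_bound_of_continuousOn (s := Icc (0 : ℝ) 1)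
      hw'.continuousOn
    exact ⟨K * M, fun i t ht => abs_segAvg_le hΩc hK
      ((norm_nonneg _).trans (hK 0 (by simp))) (hM i) (hT i) ht⟩

lemma sub_eq_mul_segAvg (hΩc : Convex ℝ Ω) {f f' : ℝ → ℝ}
    (hf : ∀ t ∈ Ω, HasDerivAt f (f' t) t) (hf' : ContinuousOn f' Ω) {T t : ℝ}
    (hT : T ∈ Ω) (ht : t ∈ Ω) : f t - f T = (t - T) * segAvg (fun _ => 1) f' T t := by
  have hd : ∀ θ ∈ uIcc (0 : ℝ) 1,
      HasDerivAt (fun θ => f (T + θ * (t - T))) ((t - T) * (1 * f' (T + θ * (t - T)))) θ := by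
    intro θ hθ
    rw [uIcc_of_le zero_le_one] at hθ
    have h1 : HasDerivAt (fun θ => T + θ * (t - T)) (t - T) θ := by
      simpa using ((hasDerivAt_id θ).mul_const (t - T)).const_add T
    exact ((hf _ (segment_mem hΩc hT ht hθ)).comp θ h1).congr_deriv (by ring)
  have hInt := intervalIntegral.integral_eq_sub_of_hasDerivAt hd (by
    refine ContinuousOn.intervalIntegrable ?_
    rw [uIcc_of_le zero_le_one]
    exact continuousOn_const.mul
      (continuousOn_segAvg_integrand hΩc continuous_const hf' hT ht))
  rw [intervalIntegral.integral_const_mul] at hInt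
  rw [segAvg, hInt]
  simp

lemma segAvg_self (w f : ℝ → ℝ) (T : ℝ) : segAvg w f T T = (∫ θ in (0 : ℝ)..1, w θ) * f T := by
  simp [segAvg]

lemma le_segAvg_one (hΩc : Convex ℝ Ω) {f : ℝ → ℝ} (hf : ContinuousOn f Ω) {c : ℝ}
    (hc : ∀ t ∈ Ω, c ≤ f t) {T t : ℝ} (hT : T ∈ Ω) (ht : t ∈ Ω) :
    c ≤ segAvg (fun _ => 1) f T t := by
  have h := intervalIntegral.integral_mono_on (μ := volume) (a := 0) (b := 1) zero_le_one
    (f := fun _ => c) (g := fun θ => 1 * f (T + θ * (t - T))) intervalIntegrable_const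
    (by
      refine ContinuousOn.intervalIntegrable ?_
      rw [uIcc_of_le zero_le_one]
      exact continuousOn_segAvg_integrand hΩc continuous_const hf hT ht)
    (fun θ hθ => by simpa using hc _ (segment_mem hΩc hT ht hθ))
  simpa [segAvg] using h

/-- A derivative vanishes off a closed set off which the function vanishes. -/
lemma deriv_eq_zero_of_eqOn_zero (hΩ : IsOpen Ω) {K : Set ℝ} (hK : IsClosed K) {f f' : ℝ → ℝ}
    (hf : ∀ t ∈ Ω, HasDerivAt f (f' t) t) (h0 : ∀ t ∈ Ω, t ∉ K → f t = 0) :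
    ∀ t ∈ Ω, t ∉ K → f' t = 0 := by
  intro t ht htK
  refine (hf t ht).unique ((hasDerivAt_const t (0 : ℝ)).congr_of_eventuallyEq ?_)
  filter_upwards [hΩ.mem_nhds ht, hK.isOpen_compl.mem_nhds htK] with x hx hxK
  exact h0 x hx hxK

end UnifCk

lemma norm_exp_I_mul_real (lam x : ℝ) : ‖Complex.exp (Complex.I * lam * x)‖ = 1 := by
  rw [show Complex.I * lam * x = ((lam * x : ℝ) : ℂ) * Complex.I by push_cast; ring,
    Complex.norm_exp_ofReal_mul_I]

lemma hasDerivAt_exp_phase {ψ : ℝ → ℝ} {p t : ℝ} (lam : ℝ) (h : HasDerivAt ψ p t) :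
    HasDerivAt (fun t => Complex.exp (Complex.I * lam * ψ t))
      (Complex.exp (Complex.I * lam * ψ t) * (Complex.I * lam * p)) t :=
  (h.ofReal_comp.const_mul (Complex.I * lam)).cexp

lemma continuousOn_exp_phase {ψ : ℝ → ℝ} {s : Set ℝ} (lam : ℝ) (h : ContinuousOn ψ s) :
    ContinuousOn (fun t => Complex.exp (Complex.I * lam * ψ t)) s :=
  (continuousOn_const.mul (Complex.continuous_ofReal.comp_continuousOn h)).cexp

/-- The integral of the derivative of `f e^{iλψ}` vanishes when `f` vanishes at the endpoints. -/
lemma integral_deriv_mul_exp_phase {α β : ℝ} (hαβ : α ≤ β) {f f' : ℝ → ℂ} {ψ p : ℝ → ℝ}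
    (hf : ∀ t ∈ Icc α β, HasDerivAt f (f' t) t) (hf' : ContinuousOn f' (Icc α β))
    (hψ : ∀ t ∈ Icc α β, HasDerivAt ψ (p t) t) (hp : ContinuousOn p (Icc α β))
    (hα : f α = 0) (hβ : f β = 0) (lam : ℝ) :
    ∫ t in α..β, (f' t + f t * (Complex.I * lam * p t)) *
      Complex.exp (Complex.I * lam * ψ t) = 0 := by
  have hfc : ContinuousOn f (Icc α β) := fun t ht => (hf t ht).continuousAt.continuousWithinAt
  have hψc : ContinuousOn ψ (Icc α β) := fun t ht => (hψ t ht).continuousAt.continuousWithinAt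
  have hd : ∀ t ∈ uIcc α β, HasDerivAt (fun t => f t * Complex.exp (Complex.I * lam * ψ t))
      ((f' t + f t * (Complex.I * lam * p t)) * Complex.exp (Complex.I * lam * ψ t)) t := by
    intro t ht
    rw [uIcc_of_le hαβ] at ht
    exact ((hf t ht).mul (hasDerivAt_exp_phase lam (hψ t ht))).congr_deriv (by ring)
  rw [intervalIntegral.integral_eq_sub_of_hasDerivAt hd, hα, hβ]
  · simp
  · refine ContinuousOn.intervalIntegrable ?_
    rw [uIcc_of_le hαβ]
    exact (hf'.add (hfc.mul (continuousOn_const.mul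
      (Complex.continuous_ofReal.comp_continuousOn hp)))).mul (continuousOn_exp_phase lam hψc)

/-- Integration by parts against a non-degenerate factor of the phase derivative. -/
lemma integral_mul_deriv_phase {α β : ℝ} (hαβ : α ≤ β) {f f' ψ p : ℝ → ℝ}
    (hf : ∀ t ∈ Icc α β, HasDerivAt f (f' t) t) (hf' : ContinuousOn f' (Icc α β))
    (hψ : ∀ t ∈ Icc α β, HasDerivAt ψ (p t) t) (hp : ContinuousOn p (Icc α β))
    (hα : f α = 0) (hβ : f β = 0) {lam : ℝ} (hlam : lam ≠ 0) :
    ∫ t in α..β, ((f t * p t : ℝ) : ℂ) * Complex.exp (Complex.I * lam * ψ t) =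
      Complex.I / lam * ∫ t in α..β, (f' t : ℂ) * Complex.exp (Complex.I * lam * ψ t) := by
  have hfc : ContinuousOn f (Icc α β) := fun t ht => (hf t ht).continuousAt.continuousWithinAt
  have hψc : ContinuousOn ψ (Icc α β) := fun t ht => (hψ t ht).continuousAt.continuousWithinAt
  have h := integral_deriv_mul_exp_phase hαβ (f := fun t => (f t : ℂ)) (f' := fun t => (f' t : ℂ))
    (fun t ht => (hf t ht).ofReal_comp) (Complex.continuous_ofReal.comp_continuousOn hf')
    hψ hp (by simp [hα]) (by simp [hβ]) lam
  have hInt : ∀ {g : ℝ → ℝ}, ContinuousOn g (Icc α β) → IntervalIntegrable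
      (fun t => (g t : ℂ) * Complex.exp (Complex.I * lam * ψ t)) volume α β := by
    intro g hg
    refine ContinuousOn.intervalIntegrable ?_
    rw [uIcc_of_le hαβ]
    exact (Complex.continuous_ofReal.comp_continuousOn hg).mul (continuousOn_exp_phase lam hψc)
  have hsplit : ∀ t, ((f' t : ℂ) + f t * (Complex.I * lam * p t)) *
      Complex.exp (Complex.I * lam * ψ t) =
      (f' t : ℂ) * Complex.exp (Complex.I * lam * ψ t) + Complex.I * lam *
        (((f t * p t : ℝ) : ℂ) * Complex.exp (Complex.I * lam * ψ t)) := by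
    intro t; push_cast; ring
  simp only [hsplit] at h
  rw [intervalIntegral.integral_add (hInt hf')
      ((hInt (g := fun t => f t * p t) (hfc.mul hp)).const_mul _),
    intervalIntegral.integral_const_mul] at h
  have hl : (lam : ℂ) ≠ 0 := by exact_mod_cast hlam
  have h' := eq_neg_of_add_eq_zero_left h
  rw [h']
  field_simp
  simp

section Families

variable {ι : Type*} {Ω K : Set ℝ} {α β : ℝ} {ψ p : ι → ℝ → ℝ}

/-- Non-stationary phase, uniformly over a family. -/
theorem nonstationary_phase (hΩ : IsOpen Ω) (hK : IsClosed K) (hαβ : α ≤ β)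
    (hsub : Icc α β ⊆ Ω) (hαK : α ∉ K) (hβK : β ∉ K)
    (hψ : ∀ i, ∀ t ∈ Ω, HasDerivAt (ψ i) (p i t) t) {c : ℝ} (hc : 0 < c)
    (hlow : ∀ i, ∀ t ∈ Ω, c ≤ |p i t|) (n : ℕ) (hp : UnifCk Ω n p) (F : ι → ℝ → ℝ)
    (hF : UnifCk Ω n F) (hF0 : ∀ i, ∀ t ∈ Ω, t ∉ K → F i t = 0) :
    ∃ B : ℝ, 0 ≤ B ∧ ∀ i, ∀ lam : ℝ, 1 < lam →
      ‖∫ t in α..β, (F i t : ℂ) * Complex.exp (Complex.I * lam * ψ i t)‖ ≤ B / lam ^ n := by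
  induction n generalizing F with
  | zero =>
    obtain ⟨M, hM0, hM⟩ := hF.1.exists_nonneg
    refine ⟨M * |β - α|, by positivity, fun i lam _ => ?_⟩
    rw [pow_zero, div_one]
    refine intervalIntegral.norm_integral_le_of_norm_le_const fun t ht => ?_
    rw [uIoc_of_le hαβ] at ht
    rw [norm_mul, norm_exp_I_mul_real, mul_one, Complex.norm_real]
    exact hM i t (hsub (Ioc_subset_Icc_self ht))
  | succ n ih =>
    have hG := hF.mul (hp.inv hc hlow)
    obtain ⟨-, G', hG', hG''⟩ := hG
    have hG0 : ∀ i, ∀ t ∈ Ω, t ∉ K → F i t * (p i t)⁻¹ = 0 := fun i t ht htK => by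
      rw [hF0 i t ht htK, zero_mul]
    obtain ⟨B, hB0, hB⟩ := ih hp.of_succ G' hG''
      (fun i => deriv_eq_zero_of_eqOn_zero hΩ hK (hG' i) (hG0 i))
    refine ⟨B, hB0, fun i lam hlam => ?_⟩
    have hlam0 : 0 < lam := by linarith
    have hibp := integral_mul_deriv_phase hαβ (fun t ht => hG' i t (hsub ht))
      ((hG''.continuousOn i).mono hsub) (fun t ht => hψ i t (hsub ht))
      ((hp.continuousOn i).mono hsub) (hG0 i α (hsub (left_mem_Icc.2 hαβ)) hαK)
      (hG0 i β (hsub (right_mem_Icc.2 hαβ)) hβK) hlam0.ne'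
    have hcongr : ∫ t in α..β, (F i t : ℂ) * Complex.exp (Complex.I * lam * ψ i t) =
        ∫ t in α..β, ((F i t * (p i t)⁻¹ * p i t : ℝ) : ℂ) *
          Complex.exp (Complex.I * lam * ψ i t) := by
      refine intervalIntegral.integral_congr fun t ht => ?_
      rw [uIcc_of_le hαβ] at ht
      have hne : p i t ≠ 0 := abs_pos.1 (hc.trans_le (hlow i t (hsub ht)))
      simp only [inv_mul_cancel_right₀ hne]
    rw [hcongr, hibp, norm_mul, norm_div, Complex.norm_I, Complex.norm_real,
      norm_of_nonneg hlam0.le]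
    calc 1 / lam * _ ≤ 1 / lam * (B / lam ^ n) :=
          mul_le_mul_of_nonneg_left (hB i lam hlam) (by positivity)
      _ = B / lam ^ (n + 1) := by rw [pow_succ]; field_simp

/-- The denominator `1 + iλu²m` used to regularise integration by parts at a critical point. -/
def vdcDen (lam u m : ℝ) : ℂ := 1 + Complex.I * (lam * u ^ 2 * m : ℝ)

lemma one_le_norm_vdcDen (lam u m : ℝ) : 1 ≤ ‖vdcDen lam u m‖ := by
  have h := Complex.abs_re_le_norm (vdcDen lam u m)
  have hre : (vdcDen lam u m).re = 1 := by
    rw [vdcDen, Complex.add_re, Complex.I_mul_re, Complex.ofReal_im]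
    simp
  rwa [hre, abs_one] at h

lemma vdcDen_ne_zero (lam u m : ℝ) : vdcDen lam u m ≠ 0 :=
  norm_pos_iff.1 (zero_lt_one.trans_le (one_le_norm_vdcDen lam u m))

lemma le_norm_vdcDen (lam u m : ℝ) : |lam * u ^ 2 * m| ≤ ‖vdcDen lam u m‖ := by
  have h := Complex.abs_im_le_norm (vdcDen lam u m)
  have him : (vdcDen lam u m).im = lam * u ^ 2 * m := by
    rw [vdcDen, Complex.add_im, Complex.I_mul_im, Complex.ofReal_re, Complex.one_im, zero_add]
  rwa [him] at h

lemma inv_norm_vdcDen_le {lam u m c : ℝ} (hlam : 0 ≤ lam) (hc : 0 ≤ c) (hm : c ≤ |m|) :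
    ‖vdcDen lam u m‖⁻¹ ≤ 2 * (1 + lam * c * u ^ 2)⁻¹ := by
  have h1 := one_le_norm_vdcDen lam u m
  have h2 := le_norm_vdcDen lam u m
  have h3 : lam * c * u ^ 2 ≤ |lam * u ^ 2 * m| := by
    rw [abs_mul, abs_of_nonneg (by positivity : 0 ≤ lam * u ^ 2)]
    nlinarith [mul_le_mul_of_nonneg_left hm (by positivity : 0 ≤ lam * u ^ 2)]
  have h4 : 0 < 1 + lam * c * u ^ 2 := by positivity
  rw [← div_eq_mul_inv, inv_eq_one_div, div_le_div_iff₀ (by linarith) h4]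
  linarith

/-- The amplitude obtained from `f` by integrating by parts with `(u e^{iλψ})' = (1 + iλu²m)
e^{iλψ}`; here `a, a', m, m'` are values of functions and their derivatives. -/
def vdcAmp (lam u a a' m m' : ℝ) : ℂ :=
  -(a' * u / vdcDen lam u m) +
    a * (Complex.I * (lam * u ^ 2 * (2 * m + u * m') : ℝ)) / vdcDen lam u m ^ 2

lemma norm_vdcAmp_le {lam u a a' m m' c M R : ℝ} (hlam : 0 ≤ lam) (hc : 0 < c) (hm : c ≤ |m|)
    (hR : |u| ≤ R) (ha : |a| ≤ M) (ha' : |a'| ≤ M) (hm' : |m'| ≤ M) :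
    ‖vdcAmp lam u a a' m m'‖ ≤ 2 * (M * R + M * (2 + R * M / c)) * (1 + lam * c * u ^ 2)⁻¹ := by
  have hM : 0 ≤ M := (abs_nonneg a).trans ha
  have hR0 : 0 ≤ R := (abs_nonneg u).trans hR
  have h1 := one_le_norm_vdcDen lam u m
  have h2 := le_norm_vdcDen lam u m
  have h3 := inv_norm_vdcDen_le (u := u) hlam hc.le hm
  set W := vdcDen lam u m with hW
  have hW0 : 0 < ‖W‖ := by linarith
  have t1 : ‖-((a' : ℂ) * u / W)‖ ≤ M * R * ‖W‖⁻¹ := by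
    rw [norm_neg, norm_div, norm_mul, Complex.norm_real, Complex.norm_real, div_eq_mul_inv]
    exact mul_le_mul_of_nonneg_right (mul_le_mul ha' hR (abs_nonneg _) hM) (by positivity)
  have t2 : |lam * u ^ 2 * (2 * m + u * m')| ≤ (2 + R * M / c) * ‖W‖ := by
    have e1 : |2 * m + u * m'| ≤ (2 + R * M / c) * |m| := by
      have : |u * m'| ≤ R * M / c * |m| := by
        rw [abs_mul]
        calc |u| * |m'| ≤ R * M := mul_le_mul hR hm' (abs_nonneg _) hR0
          _ = R * M / c * c := by field_simp
          _ ≤ R * M / c * |m| := mul_le_mul_of_nonneg_left hm (by positivity)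
      calc |2 * m + u * m'| ≤ |2 * m| + |u * m'| := abs_add_le _ _
        _ ≤ 2 * |m| + R * M / c * |m| := by rw [abs_mul, abs_two]; linarith
        _ = _ := by ring
    calc |lam * u ^ 2 * (2 * m + u * m')| = |lam * u ^ 2| * |2 * m + u * m'| := abs_mul _ _
      _ ≤ |lam * u ^ 2| * ((2 + R * M / c) * |m|) :=
        mul_le_mul_of_nonneg_left e1 (abs_nonneg _)
      _ = (2 + R * M / c) * |lam * u ^ 2 * m| := by rw [abs_mul _ m]; ring
      _ ≤ _ := mul_le_mul_of_nonneg_left h2 (by positivity)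
  have t3 : ‖(a : ℂ) * (Complex.I * (lam * u ^ 2 * (2 * m + u * m') : ℝ)) / W ^ 2‖ ≤
      M * (2 + R * M / c) * ‖W‖⁻¹ := by
    rw [norm_div, norm_mul, norm_mul, Complex.norm_I, one_mul, Complex.norm_real,
      Complex.norm_real, norm_pow, div_le_iff₀ (by positivity)]
    calc ‖a‖ * ‖lam * u ^ 2 * (2 * m + u * m')‖ ≤ M * ((2 + R * M / c) * ‖W‖) :=
          mul_le_mul ha t2 (norm_nonneg _) hM
      _ = _ := by field_simp
  calc ‖vdcAmp lam u a a' m m'‖ ≤ _ := norm_add_le _ _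
    _ ≤ M * R * ‖W‖⁻¹ + M * (2 + R * M / c) * ‖W‖⁻¹ := add_le_add t1 t3
    _ = (M * R + M * (2 + R * M / c)) * ‖W‖⁻¹ := by ring
    _ ≤ (M * R + M * (2 + R * M / c)) * (2 * (1 + lam * c * u ^ 2)⁻¹) :=
      mul_le_mul_of_nonneg_left h3 (by positivity)
    _ = _ := by ring

lemma integral_eq_integral_vdcAmp (hαβ : α ≤ β) {f f' m m' φ : ℝ → ℝ} {T : ℝ}
    (hf : ∀ t ∈ Icc α β, HasDerivAt f (f' t) t) (hf' : ContinuousOn f' (Icc α β))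
    (hm : ∀ t ∈ Icc α β, HasDerivAt m (m' t) t) (hm' : ContinuousOn m' (Icc α β))
    (hφ : ∀ t ∈ Icc α β, HasDerivAt φ ((t - T) * m t) t)
    (hα : f α = 0) (hβ : f β = 0) (lam : ℝ) :
    ∫ t in α..β, (f t : ℂ) * Complex.exp (Complex.I * lam * φ t) =
      ∫ t in α..β, vdcAmp lam (t - T) (f t) (f' t) (m t) (m' t) *
        Complex.exp (Complex.I * lam * φ t) := by
  have hfc : ContinuousOn f (Icc α β) := fun t ht => (hf t ht).continuousAt.continuousWithinAt
  have hmc : ContinuousOn m (Icc α β) := fun t ht => (hm t ht).continuousAt.continuousWithinAt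
  have hφc : ContinuousOn φ (Icc α β) := fun t ht => (hφ t ht).continuousAt.continuousWithinAt
  have hofReal : ∀ {g : ℝ → ℝ}, ContinuousOn g (Icc α β) →
      ContinuousOn (fun t => (g t : ℂ)) (Icc α β) :=
    fun hg => Complex.continuous_ofReal.comp_continuousOn hg
  have hden : ContinuousOn (fun t => vdcDen lam (t - T) (m t)) (Icc α β) :=
    continuousOn_const.add (continuousOn_const.mul (hofReal (by fun_prop)))
  have hamp : ContinuousOn (fun t => vdcAmp lam (t - T) (f t) (f' t) (m t) (m' t)) (Icc α β) := by
    unfold vdcAmp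
    have hu : ContinuousOn (fun t : ℝ => ((t - T : ℝ) : ℂ)) (Icc α β) := hofReal (by fun_prop)
    exact (((hofReal hf').mul hu).div hden (fun t _ => vdcDen_ne_zero _ _ _)).neg.add
      (((hofReal hfc).mul (continuousOn_const.mul (hofReal (by fun_prop)))).div (hden.pow 2)
        (fun t _ => pow_ne_zero 2 (vdcDen_ne_zero _ _ _)))
  have hdden : ∀ t ∈ Icc α β, HasDerivAt (fun t => vdcDen lam (t - T) (m t))
      (Complex.I * (lam * (2 * (t - T)) * m t + lam * (t - T) ^ 2 * m' t : ℝ)) t := by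
    intro t ht
    have hu : HasDerivAt (fun t => lam * (t - T) ^ 2) (lam * (2 * (t - T))) t := by
      simpa using (((hasDerivAt_id t).sub_const T).pow 2).const_mul lam
    exact ((hu.mul (hm t ht)).ofReal_comp.const_mul Complex.I).const_add 1
  have hd : ∀ t ∈ Icc α β, HasDerivAt (fun t => (f t : ℂ) * (t - T : ℝ) / vdcDen lam (t - T) (m t))
      (f t - vdcAmp lam (t - T) (f t) (f' t) (m t) (m' t) -
        (f t : ℂ) * (t - T : ℝ) / vdcDen lam (t - T) (m t) *
          (Complex.I * lam * ((t - T) * m t : ℝ))) t := by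
    intro t ht
    have hu : HasDerivAt (fun t : ℝ => ((t - T : ℝ) : ℂ)) ((1 : ℝ) : ℂ) t :=
      ((hasDerivAt_id t).sub_const T).ofReal_comp
    refine (((hf t ht).ofReal_comp.mul hu).div (hdden t ht) (vdcDen_ne_zero _ _ _)).congr_deriv ?_
    have hne := vdcDen_ne_zero lam (t - T) (m t)
    have hW : vdcDen lam (t - T) (m t) = 1 + Complex.I * (lam * (t - T) ^ 2 * m t : ℝ) := rfl
    unfold vdcAmp
    set W := vdcDen lam (t - T) (m t)
    field_simp
    simp only [Pi.mul_apply]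
    push_cast at hW ⊢
    have hW2 : W ^ 2 = W * (1 + Complex.I * (lam * (t - T) ^ 2 * m t)) := by rw [pow_two, ← hW]
    rw [hW2]
    ring
  have key := integral_deriv_mul_exp_phase hαβ hd (by
      exact ((hofReal hfc).sub hamp).sub ((((hofReal hfc).mul (hofReal (by fun_prop))).div hden
        (fun t _ => vdcDen_ne_zero _ _ _)).mul (continuousOn_const.mul (hofReal (by fun_prop)))))
    hφ (by fun_prop) (by simp [hα]) (by simp [hβ]) lam
  have hInt : ∀ {g : ℝ → ℂ}, ContinuousOn g (Icc α β) → IntervalIntegrable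
      (fun t => g t * Complex.exp (Complex.I * lam * φ t)) volume α β := by
    intro g hg
    refine ContinuousOn.intervalIntegrable ?_
    rw [uIcc_of_le hαβ]
    exact hg.mul (continuousOn_exp_phase lam hφc)
  simp only [sub_add_cancel, sub_mul] at key
  rw [intervalIntegral.integral_sub (hInt (hofReal hfc)) (hInt hamp)] at key
  exact sub_eq_zero.1 key

lemma integral_inv_one_add_mul_sq {b : ℝ} (hb : 0 < b) (T : ℝ) :
    Integrable (fun t : ℝ => (1 + b * (t - T) ^ 2)⁻¹) ∧
      ∫ t : ℝ, (1 + b * (t - T) ^ 2)⁻¹ = π / √b := by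
  have hb' : 0 < √b := Real.sqrt_pos.2 hb
  have he : (fun t : ℝ => (1 + b * (t - T) ^ 2)⁻¹) =
      fun t => (fun s : ℝ => (fun x : ℝ => (1 + x ^ 2)⁻¹) (√b * s)) (t - T) := by
    funext t
    simp only [mul_pow, Real.sq_sqrt hb.le]
  rw [he]
  refine ⟨(integrable_inv_one_add_sq.comp_mul_left' hb'.ne').comp_sub_right T, ?_⟩
  rw [integral_sub_right_eq_self (fun s : ℝ => (fun x : ℝ => (1 + x ^ 2)⁻¹) (√b * s)) T,
    Measure.integral_comp_mul_left (fun x : ℝ => (1 + x ^ 2)⁻¹) (√b), integral_univ_inv_one_add_sq,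
    abs_of_pos (by positivity)]
  rw [smul_eq_mul, div_eq_mul_inv, mul_comm]

/-- A uniform van der Corput bound for a family of phases with non-degenerate critical points. -/
theorem vanDerCorput (hαβ : α ≤ β) (hsub : Icc α β ⊆ Ω) (hαK : α ∉ K) (hβK : β ∉ K)
    {T : ι → ℝ} {R : ℝ} (hR : ∀ i, ∀ t ∈ Ω, |t - T i| ≤ R) {m : ι → ℝ → ℝ} (hm : UnifCk Ω 1 m)
    {c : ℝ} (hc : 0 < c) (hlow : ∀ i, ∀ t ∈ Ω, c ≤ |m i t|)
    (hψ : ∀ i, ∀ t ∈ Ω, HasDerivAt (ψ i) ((t - T i) * m i t) t) {F : ι → ℝ → ℝ}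
    (hF : UnifCk Ω 1 F) (hF0 : ∀ i, ∀ t ∈ Ω, t ∉ K → F i t = 0) :
    ∃ B : ℝ, 0 ≤ B ∧ ∀ i, ∀ lam : ℝ, 1 < lam →
      ‖∫ t in α..β, (F i t : ℂ) * Complex.exp (Complex.I * lam * ψ i t)‖ ≤ B / √lam := by
  obtain ⟨-, m', hm', hm''⟩ := hm
  obtain ⟨⟨M₁, hM₁⟩, F', hF', hF''⟩ := hF
  obtain ⟨M₂, hM₂⟩ := hF''.unifBdd
  obtain ⟨M₃, hM₃⟩ := hm''.unifBdd
  set M := |M₁| + |M₂| + |M₃| with hM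
  have b1 := abs_nonneg M₁
  have b2 := abs_nonneg M₂
  have b3 := abs_nonneg M₃
  set C := 2 * (M * |R| + M * (2 + |R| * M / c)) with hC
  have hC0 : 0 ≤ C := by positivity
  refine ⟨C * (π / √c), by positivity, fun i lam hlam => ?_⟩
  have hlam0 : 0 < lam := by linarith
  rw [integral_eq_integral_vdcAmp hαβ (fun t ht => hF' i t (hsub ht))
    ((hF''.continuousOn i).mono hsub) (fun t ht => hm' i t (hsub ht))
    ((hm''.continuousOn i).mono hsub) (fun t ht => hψ i t (hsub ht))
    (hF0 i α (hsub (left_mem_Icc.2 hαβ)) hαK) (hF0 i β (hsub (right_mem_Icc.2 hαβ)) hβK) lam]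
  obtain ⟨hi, hv⟩ := integral_inv_one_add_mul_sq (mul_pos hlam0 hc) (T i)
  calc _ ≤ ∫ t in α..β, C * (1 + lam * c * (t - T i) ^ 2)⁻¹ := by
        refine intervalIntegral.norm_integral_le_of_norm_le hαβ
          (Filter.Eventually.of_forall fun t ht => ?_) (hi.const_mul C).intervalIntegrable
        have ht' := hsub (Ioc_subset_Icc_self ht)
        rw [norm_mul, norm_exp_I_mul_real, mul_one]
        refine norm_vdcAmp_le hlam0.le hc (hlow i t ht') ((hR i t ht').trans (le_abs_self R))
          ?_ ?_ ?_
        · linarith [hM₁ i t ht', le_abs_self M₁]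
        · linarith [hM₂ i t ht', le_abs_self M₂]
        · linarith [hM₃ i t ht', le_abs_self M₃]
    _ ≤ ∫ t : ℝ, C * (1 + lam * c * (t - T i) ^ 2)⁻¹ := by
        rw [intervalIntegral.integral_of_le hαβ]
        exact setIntegral_le_integral (hi.const_mul C)
          (Filter.Eventually.of_forall fun t => by positivity)
    _ = C * (π / √c) / √lam := by
        rw [integral_const_mul, hv, Real.sqrt_mul hlam0.le]
        field_simp

end Families

lemma tendsto_nhdsGT_integral_regularized_fresnel {m : ℝ} (hm : m ≠ 0) :
    Filter.Tendsto (fun ε : ℝ => ∫ x : ℝ, (vdcAmp 1 x 1 0 m 0 + 2 * ε * x ^ 2 / vdcDen 1 x m) *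
        Complex.exp (-(ε - Complex.I * m / 2) * x ^ 2)) (nhdsWithin 0 (Ioi 0))
      (nhds (∫ x : ℝ, vdcAmp 1 x 1 0 m 0 *
        Complex.exp (Complex.I * (1 : ℝ) * (x ^ 2 * (m / 2) : ℝ)))) := by
  have hden : Continuous fun x : ℝ => vdcDen 1 x m := by unfold vdcDen; fun_prop
  have hden0 : ∀ x : ℝ, vdcDen 1 x m ≠ 0 := fun x => vdcDen_ne_zero 1 x m
  have hamp : Continuous fun x : ℝ => vdcAmp 1 x 1 0 m 0 := by
    unfold vdcAmp
    have := fun x => pow_ne_zero 2 (hden0 x)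
    fun_prop (disch := assumption)
  have hmpos : 0 < |m| := abs_pos.2 hm
  refine tendsto_integral_filter_of_dominated_convergence
    (fun x : ℝ => 8 * (1 + |m| * (x - 0) ^ 2)⁻¹) ?_ ?_
    ((integral_inv_one_add_mul_sq hmpos 0).1.const_mul 8) ?_
  · refine Filter.Eventually.of_forall fun ε => Continuous.aestronglyMeasurable ?_
    fun_prop (disch := assumption)
  · filter_upwards [self_mem_nhdsWithin] with ε hε
    have hε : 0 < ε := hε
    refine Filter.Eventually.of_forall fun x => ?_
    have h1 := one_le_norm_vdcDen 1 x m
    have h2 := le_norm_vdcDen 1 x m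
    have h3 := inv_norm_vdcDen_le (lam := 1) (u := x) zero_le_one hmpos.le (le_refl |m|)
    have hexp : ‖Complex.exp (-(ε - Complex.I * m / 2) * x ^ 2)‖ = Real.exp (-(ε * x ^ 2)) := by
      rw [Complex.norm_exp, show -((ε : ℂ) - Complex.I * m / 2) * (x : ℂ) ^ 2 =
        ((-(ε * x ^ 2) : ℝ) : ℂ) + ((m / 2 * x ^ 2 : ℝ) : ℂ) * Complex.I by push_cast; ring]
      rw [Complex.add_re, Complex.re_ofReal_mul, Complex.I_re, Complex.ofReal_re, mul_zero,
        add_zero]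
    set W := vdcDen 1 x m with hW
    have hW0 : 0 < ‖W‖ := by linarith
    have hy : 0 ≤ ε * x ^ 2 := by positivity
    have he1 : Real.exp (-(ε * x ^ 2)) ≤ 1 := Real.exp_le_one_iff.2 (by linarith)
    have he2 : ε * x ^ 2 * Real.exp (-(ε * x ^ 2)) ≤ 1 := by
      rw [Real.exp_neg, ← div_eq_mul_inv, div_le_one (Real.exp_pos _)]
      linarith [Real.add_one_le_exp (ε * x ^ 2)]
    have hA : ‖vdcAmp 1 x 1 0 m 0‖ ≤ 2 * ‖W‖⁻¹ := by
      have : vdcAmp 1 x 1 0 m 0 = Complex.I * ((2 * (1 * x ^ 2 * m) : ℝ) : ℂ) / W ^ 2 := by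
        simp only [vdcAmp, ← hW]
        push_cast
        ring
      rw [this, norm_div, norm_mul, Complex.norm_I, one_mul, Complex.norm_real, norm_pow,
        Real.norm_eq_abs, abs_mul, abs_two, div_le_iff₀ (by positivity)]
      calc 2 * |1 * x ^ 2 * m| ≤ 2 * ‖W‖ := by linarith
        _ = _ := by field_simp
    have hE : ‖2 * (ε : ℂ) * x ^ 2 / W‖ = 2 * (ε * x ^ 2) * ‖W‖⁻¹ := by
      rw [show 2 * (ε : ℂ) * x ^ 2 = ((2 * (ε * x ^ 2) : ℝ) : ℂ) by push_cast; ring, norm_div,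
        Complex.norm_real, Real.norm_of_nonneg (by positivity), div_eq_mul_inv]
    rw [norm_mul, hexp, sub_zero]
    have hinv : 0 ≤ ‖W‖⁻¹ := by positivity
    calc _ ≤ (2 * ‖W‖⁻¹ + 2 * (ε * x ^ 2) * ‖W‖⁻¹) * Real.exp (-(ε * x ^ 2)) := by
          refine mul_le_mul_of_nonneg_right ((norm_add_le _ _).trans ?_) (Real.exp_pos _).le
          rw [hE]
          linarith
      _ = 2 * ‖W‖⁻¹ * Real.exp (-(ε * x ^ 2)) +
          2 * ‖W‖⁻¹ * (ε * x ^ 2 * Real.exp (-(ε * x ^ 2))) := by ring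
      _ ≤ 2 * ‖W‖⁻¹ * 1 + 2 * ‖W‖⁻¹ * 1 := by gcongr
      _ ≤ 8 * (1 + |m| * x ^ 2)⁻¹ := by
          rw [one_mul] at h3
          linarith
  · refine Filter.Eventually.of_forall fun x => ?_
    have hc : Continuous fun ε : ℝ => (vdcAmp 1 x 1 0 m 0 + 2 * ε * x ^ 2 / vdcDen 1 x m) *
        Complex.exp (-(ε - Complex.I * m / 2) * x ^ 2) := by fun_prop
    have := (hc.tendsto 0).mono_left (nhdsWithin_le_nhds (s := Ioi 0))
    convert this using 2
    simp only [Complex.ofReal_zero, mul_zero, zero_mul, zero_div, add_zero, zero_sub, neg_neg]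
    congr 2
    push_cast
    ring

lemma integral_gaussian_eq_regularized {m ε : ℝ} (hε : 0 < ε) :
    ∫ x : ℝ, Complex.exp (-(ε - Complex.I * m / 2) * x ^ 2) =
      ∫ x : ℝ, (vdcAmp 1 x 1 0 m 0 + 2 * ε * x ^ 2 / vdcDen 1 x m) *
        Complex.exp (-(ε - Complex.I * m / 2) * x ^ 2) := by
  set b : ℂ := ε - Complex.I * m / 2 with hb
  have hbre : 0 < b.re := by
    have : b.re = ε := by
      rw [hb, show Complex.I * (m : ℂ) / 2 = ((m / 2 : ℝ) : ℂ) * Complex.I by push_cast; ring]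
      rw [Complex.sub_re, Complex.re_ofReal_mul, Complex.I_re, mul_zero, sub_zero,
        Complex.ofReal_re]
    rwa [this]
  have hden : Continuous fun x : ℝ => vdcDen 1 x m := by unfold vdcDen; fun_prop
  have hden0 : ∀ x : ℝ, vdcDen 1 x m ≠ 0 := fun x => vdcDen_ne_zero 1 x m
  have hInt := integrable_cexp_neg_mul_sq hbre
  have hd : ∀ x : ℝ, HasDerivAt (fun x : ℝ => (vdcDen 1 x m)⁻¹ * (x * Complex.exp (-b * x ^ 2)))
      (Complex.exp (-b * x ^ 2) - (vdcAmp 1 x 1 0 m 0 + 2 * ε * x ^ 2 / vdcDen 1 x m) *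
        Complex.exp (-b * x ^ 2)) x := by
    intro x
    have h1 : HasDerivAt (fun x : ℝ => vdcDen 1 x m) (Complex.I * (2 * x * m)) x := by
      have h0 : HasDerivAt (fun x : ℝ => 1 * x ^ 2 * m) (1 * (2 * x) * m) x := by
        simpa using (((hasDerivAt_id x).pow 2).const_mul 1).mul_const m
      exact ((h0.ofReal_comp.const_mul Complex.I).const_add 1).congr_deriv (by push_cast; ring)
    have h2 : HasDerivAt (fun x : ℝ => (x : ℂ)) 1 x := by
      simpa using (hasDerivAt_id x).ofReal_comp
    have h3 : HasDerivAt (fun x : ℝ => Complex.exp (-b * x ^ 2))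
        (Complex.exp (-b * x ^ 2) * (-b * (2 * x))) x := by
      have := ((h2.pow 2).const_mul (-b)).cexp
      simpa using this
    refine ((h1.fun_inv (hden0 x)).mul (h2.mul h3)).congr_deriv ?_
    have hW : vdcDen 1 x m = 1 + Complex.I * (x ^ 2 * m) := by simp [vdcDen]
    have hne := hden0 x
    have hb2 : (ε : ℂ) = b + Complex.I * m / 2 := by rw [hb]; ring
    simp only [vdcAmp, hb2]
    set W := vdcDen 1 x m
    simp only [Pi.mul_apply]
    field_simp
    push_cast
    have hW2 : W ^ 2 = W * (1 + Complex.I * (x ^ 2 * m)) := by rw [pow_two, ← hW]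
    rw [hW2]
    ring
  have hinv : Continuous fun x : ℝ => (vdcDen 1 x m)⁻¹ := hden.inv₀ hden0
  have hinvb : ∀ x : ℝ, ‖(vdcDen 1 x m)⁻¹‖ ≤ 1 := fun x => by
    rw [norm_inv]
    exact inv_le_one_of_one_le₀ (one_le_norm_vdcDen 1 x m)
  have hsq : Integrable fun x : ℝ => (x : ℂ) ^ 2 * Complex.exp (-b * x ^ 2) := by
    have h := (integrable_rpow_mul_exp_neg_mul_sq hbre (s := 2) (by norm_num)).norm
    refine h.mono (by fun_prop) (Filter.Eventually.of_forall fun x => ?_)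
    rw [norm_mul, norm_cexp_neg_mul_sq]
    simp
  have hA : Integrable fun x : ℝ => (vdcAmp 1 x 1 0 m 0 + 2 * ε * x ^ 2 / vdcDen 1 x m) *
        Complex.exp (-b * x ^ 2) := by
    have he : (fun x : ℝ => (vdcAmp 1 x 1 0 m 0 + 2 * ε * x ^ 2 / vdcDen 1 x m) *
        Complex.exp (-b * x ^ 2)) = fun x : ℝ =>
        ((Complex.I * 2 * m * (vdcDen 1 x m)⁻¹ + 2 * ε) * (vdcDen 1 x m)⁻¹) *
          ((x : ℂ) ^ 2 * Complex.exp (-b * x ^ 2)) := by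
      funext x
      simp only [vdcAmp]
      push_cast
      have := hden0 x
      field_simp
      ring
    rw [he]
    refine hsq.bdd_mul (c := (‖Complex.I * 2 * m‖ * 1 + ‖2 * (ε : ℂ)‖) * 1)
      (by fun_prop) (Filter.Eventually.of_forall fun x => ?_)
    rw [norm_mul]
    refine mul_le_mul ((norm_add_le _ _).trans (add_le_add_left ?_ _)) (hinvb x) (norm_nonneg _)
      (by positivity)
    rw [norm_mul]
    exact mul_le_mul_of_nonneg_left (hinvb x) (norm_nonneg _)
  have key := integral_eq_zero_of_hasDerivAt_of_integrable hd (hInt.sub hA)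
    ((integrable_mul_cexp_neg_mul_sq hbre).bdd_mul (c := 1) (by fun_prop)
      (Filter.Eventually.of_forall hinvb))
  rw [integral_sub hInt hA] at key
  exact sub_eq_zero.1 key

lemma cpow_half_fresnel {s q : ℝ} (hs : s = 1 ∨ s = -1) (hq : 0 < q) :
    (π / (-(Complex.I * (s * q : ℝ) / 2)) : ℂ) ^ (1 / 2 : ℂ) =
      Complex.exp (Complex.I * s * π / 4) * (√(2 * π) : ℝ) * (q ^ (-(1 / 2 : ℝ)) : ℝ) := by
  have hpos : 0 < 2 * π / q := by positivity
  have hz : (π / (-(Complex.I * (s * q : ℝ) / 2)) : ℂ) =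
      Complex.exp (Real.log (2 * π / q) + (s * (π / 2) : ℝ) * Complex.I) := by
    have hqc : (q : ℂ) ≠ 0 := by exact_mod_cast hq.ne'
    rw [Complex.exp_add, ← Complex.ofReal_exp, Real.exp_log hpos, Complex.exp_mul_I,
      ← Complex.ofReal_cos, ← Complex.ofReal_sin]
    rcases hs with rfl | rfl
    · simp
      field_simp
      simp
    · simp
      field_simp
      simp
  have hlog : Complex.log (Complex.exp (Real.log (2 * π / q) + (s * (π / 2) : ℝ) * Complex.I)) =
      Real.log (2 * π / q) + (s * (π / 2) : ℝ) * Complex.I := by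
    have him : ((Real.log (2 * π / q) : ℂ) + (s * (π / 2) : ℝ) * Complex.I).im = s * (π / 2) := by
      rw [Complex.add_im, Complex.ofReal_im, Complex.im_ofReal_mul, Complex.I_im]
      ring
    have hpi := Real.pi_pos
    apply Complex.log_exp <;> rw [him] <;> rcases hs with rfl | rfl <;> linarith
  rw [hz, Complex.cpow_def_of_ne_zero (Complex.exp_ne_zero _), hlog, add_mul, Complex.exp_add,
    show (Real.log (2 * π / q) : ℂ) * (1 / 2) = ((Real.log (2 * π / q) * (1 / 2) : ℝ) : ℂ) by
      push_cast; ring, ← Complex.ofReal_exp, ← Real.rpow_def_of_pos hpos,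
    Real.div_rpow (by positivity) hq.le, ← Real.sqrt_eq_rpow, Real.rpow_neg hq.le]
  rw [show ((s * (π / 2) : ℝ) : ℂ) * Complex.I * (1 / 2) = Complex.I * s * π / 4 by
    push_cast; ring]
  push_cast
  ring

/-- The Fresnel integral, in absolutely convergent form. -/
theorem integral_fresnel {s q : ℝ} (hs : s = 1 ∨ s = -1) (hq : 0 < q) :
    ∫ x : ℝ, vdcAmp 1 x 1 0 (s * q) 0 *
        Complex.exp (Complex.I * (1 : ℝ) * (x ^ 2 * (s * q / 2) : ℝ)) =
      Complex.exp (Complex.I * s * π / 4) * (√(2 * π) : ℝ) * (q ^ (-(1 / 2 : ℝ)) : ℝ) := by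
  have hs0 : s ≠ 0 := by rcases hs with rfl | rfl <;> norm_num
  have hm : s * q ≠ 0 := mul_ne_zero hs0 hq.ne'
  rw [← cpow_half_fresnel hs hq]
  refine tendsto_nhds_unique (tendsto_nhdsGT_integral_regularized_fresnel hm) ?_
  have hmc : Complex.I * (s * q : ℝ) / 2 ≠ 0 :=
    div_ne_zero (mul_ne_zero Complex.I_ne_zero (by exact_mod_cast hm)) two_ne_zero
  have hslit : (π / (-(Complex.I * (s * q : ℝ) / 2)) : ℂ) ∈ Complex.slitPlane := by
    have hqc : ((s * q : ℝ) : ℂ) ≠ 0 := by exact_mod_cast hm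
    have hz : (π / (-(Complex.I * (s * q : ℝ) / 2)) : ℂ) =
        ((2 * π / (s * q) : ℝ) : ℂ) * Complex.I := by
      rw [Complex.ofReal_div]
      field_simp
      push_cast
      simp [mul_comm]
    rw [hz, Complex.mem_slitPlane_iff, Complex.im_ofReal_mul, Complex.I_im, mul_one]
    exact Or.inr (div_ne_zero (by positivity) hm)
  have hcont : Filter.Tendsto
      (fun ε : ℝ => (π / (ε - Complex.I * (s * q : ℝ) / 2) : ℂ) ^ (1 / 2 : ℂ)) (nhds 0)
      (nhds ((π / (-(Complex.I * (s * q : ℝ) / 2)) : ℂ) ^ (1 / 2 : ℂ))) := by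
    have h0 : Filter.Tendsto (fun ε : ℝ => (π / (ε - Complex.I * (s * q : ℝ) / 2) : ℂ)) (nhds 0)
        (nhds (π / (-(Complex.I * (s * q : ℝ) / 2)) : ℂ)) := by
      refine Filter.Tendsto.div tendsto_const_nhds ?_ (neg_ne_zero.2 hmc)
      have : Continuous fun ε : ℝ => (ε - Complex.I * (s * q : ℝ) / 2 : ℂ) := by fun_prop
      simpa using this.tendsto 0
    exact h0.cpow tendsto_const_nhds hslit
  refine (hcont.mono_left nhdsWithin_le_nhds).congr' ?_
  filter_upwards [self_mem_nhdsWithin] with ε hε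
  have hε : 0 < ε := hε
  rw [← integral_gaussian_eq_regularized hε, integral_gaussian_complex]
  rw [show Complex.I * ((s * q : ℝ) : ℂ) / 2 = ((s * q / 2 : ℝ) : ℂ) * Complex.I by push_cast; ring,
    Complex.sub_re, Complex.re_ofReal_mul, Complex.I_re, mul_zero, sub_zero, Complex.ofReal_re]
  exact hε

lemma vdcDen_div_sqrt {lam : ℝ} (hlam : 0 < lam) (x m : ℝ) :
    vdcDen lam ((√lam)⁻¹ * x) m = vdcDen 1 x m := by
  have h : lam * ((√lam)⁻¹ * x) ^ 2 = x ^ 2 := by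
    rw [mul_pow, inv_pow, Real.sq_sqrt hlam.le]
    field_simp
  rw [vdcDen, vdcDen, h, one_mul]

/-- Leading-order asymptotics at a non-degenerate critical point. -/
lemma tendsto_sqrt_mul_integral {α β T c : ℝ} (hT : T ∈ Ioo α β) {f f' m m' k φ : ℝ → ℝ}
    (hf : ∀ t ∈ Icc α β, HasDerivAt f (f' t) t) (hf' : ContinuousOn f' (Icc α β))
    (hm : ∀ t ∈ Icc α β, HasDerivAt m (m' t) t) (hm' : ContinuousOn m' (Icc α β))
    (hc : 0 < c) (hlow : ∀ t ∈ Icc α β, c ≤ |m t|)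
    (hφ : ∀ t ∈ Icc α β, HasDerivAt φ ((t - T) * m t) t)
    (hk : ContinuousOn k (Icc α β)) (hφk : ∀ t ∈ Icc α β, φ t = (t - T) ^ 2 * k t)
    (hα : f α = 0) (hβ : f β = 0) :
    Filter.Tendsto (fun lam : ℝ => (√lam : ℂ) *
        ∫ t in α..β, (f t : ℂ) * Complex.exp (Complex.I * lam * φ t)) Filter.atTop
      (nhds (f T * ∫ x : ℝ, vdcAmp 1 x 1 0 (m T) 0 *
        Complex.exp (Complex.I * (1 : ℝ) * (x ^ 2 * k T : ℝ)))) := by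
  have hαβ : α ≤ β := (hT.1.trans hT.2).le
  have hfc : ContinuousOn f (Icc α β) := fun t ht => (hf t ht).continuousAt.continuousWithinAt
  have hmc : ContinuousOn m (Icc α β) := fun t ht => (hm t ht).continuousAt.continuousWithinAt
  have hφc : ContinuousOn φ (Icc α β) := fun t ht => (hφ t ht).continuousAt.continuousWithinAt
  have hnhds : Icc α β ∈ nhds T := Icc_mem_nhds hT.1 hT.2
  obtain ⟨M₁, hM₁⟩ := isCompact_Icc.exists_bound_of_continuousOn hfc
  obtain ⟨M₂, hM₂⟩ := isCompact_Icc.exists_bound_of_continuousOn hf'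
  obtain ⟨M₃, hM₃⟩ := isCompact_Icc.exists_bound_of_continuousOn hm'
  set M := |M₁| + |M₂| + |M₃| with hM
  have b1 := abs_nonneg M₁
  have b2 := abs_nonneg M₂
  have b3 := abs_nonneg M₃
  have hofReal : ∀ {g : ℝ → ℝ}, ContinuousOn g (Icc α β) →
      ContinuousOn (fun t => (g t : ℂ)) (Icc α β) :=
    fun hg => Complex.continuous_ofReal.comp_continuousOn hg
  set C := 2 * (M * (β - α) + M * (2 + (β - α) * M / c)) with hC
  set g : ℝ → ℝ → ℂ := fun lam => (Icc α β).indicator fun t =>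
    vdcAmp lam (t - T) (f t) (f' t) (m t) (m' t) * Complex.exp (Complex.I * lam * φ t) with hg
  have hgc : ∀ lam, ContinuousOn (fun t => vdcAmp lam (t - T) (f t) (f' t) (m t) (m' t) *
      Complex.exp (Complex.I * lam * φ t)) (Icc α β) := by
    intro lam
    have hden : ContinuousOn (fun t => vdcDen lam (t - T) (m t)) (Icc α β) :=
      continuousOn_const.add (continuousOn_const.mul (hofReal (by fun_prop)))
    refine ContinuousOn.mul ?_ (continuousOn_exp_phase lam hφc)
    unfold vdcAmp
    have hu : ContinuousOn (fun t : ℝ => ((t - T : ℝ) : ℂ)) (Icc α β) := hofReal (by fun_prop)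
    exact (((hofReal hf').mul hu).div hden (fun t _ => vdcDen_ne_zero _ _ _)).neg.add
      (((hofReal hfc).mul (continuousOn_const.mul (hofReal (by fun_prop)))).div (hden.pow 2)
        (fun t _ => pow_ne_zero 2 (vdcDen_ne_zero _ _ _)))
  -- After rescaling, the integral has a fixed domain and dominated convergence applies.
  have hscale : ∀ lam : ℝ, 0 < lam → (√lam : ℂ) *
      ∫ t in α..β, (f t : ℂ) * Complex.exp (Complex.I * lam * φ t) =
        ∫ x : ℝ, g lam (T + (√lam)⁻¹ * x) := by
    intro lam hlam
    have hs : 0 < √lam := Real.sqrt_pos.2 hlam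
    rw [integral_eq_integral_vdcAmp hαβ hf hf' hm hm' hφ hα hβ lam,
      Measure.integral_comp_mul_left (fun y => g lam (T + y)) (√lam)⁻¹,
      integral_add_left_eq_self (g lam) T, intervalIntegral.integral_of_le hαβ,
      ← integral_Icc_eq_integral_Ioc, hg]
    simp only
    rw [integral_indicator measurableSet_Icc, inv_inv, abs_of_pos hs, Complex.real_smul]
  have hev : ∀ᶠ lam : ℝ in Filter.atTop, 0 < lam := Filter.eventually_gt_atTop 0
  refine Filter.Tendsto.congr' (f₁ := fun lam : ℝ => ∫ x : ℝ, g lam (T + (√lam)⁻¹ * x)) ?_ ?_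
  · filter_upwards [hev] with lam hlam using (hscale lam hlam).symm
  rw [← integral_const_mul]
  refine tendsto_integral_filter_of_dominated_convergence
    (fun x : ℝ => C * (1 + c * (x - 0) ^ 2)⁻¹) ?_ ?_
    ((integral_inv_one_add_mul_sq hc 0).1.const_mul C) ?_
  · filter_upwards [hev] with lam hlam
    have hs : 0 < √lam := Real.sqrt_pos.2 hlam
    have hInt : Integrable (g lam) :=
      (integrable_indicator_iff measurableSet_Icc).2 ((hgc lam).integrableOn_compact isCompact_Icc)
    exact ((hInt.comp_add_left T).comp_mul_left' (inv_ne_zero hs.ne')).aestronglyMeasurable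
  · filter_upwards [hev] with lam hlam
    refine Filter.Eventually.of_forall fun x => ?_
    have hpos : 0 < 1 + c * (x - 0) ^ 2 := by positivity
    have hba : 0 ≤ β - α := by linarith
    by_cases hx : T + (√lam)⁻¹ * x ∈ Icc α β
    · simp only [hg, indicator_of_mem hx]
      rw [norm_mul, norm_exp_I_mul_real, mul_one, add_sub_cancel_left]
      have hR : |(√lam)⁻¹ * x| ≤ β - α := by
        rw [abs_le]
        constructor <;> linarith [hx.1, hx.2, hT.1, hT.2]
      refine (norm_vdcAmp_le hlam.le hc (hlow _ hx) hR (M := M) ?_ ?_ ?_).trans (le_of_eq ?_)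
      · linarith [hM₁ _ hx, le_abs_self M₁, Real.norm_eq_abs (f (T + (√lam)⁻¹ * x))]
      · linarith [hM₂ _ hx, le_abs_self M₂, Real.norm_eq_abs (f' (T + (√lam)⁻¹ * x))]
      · linarith [hM₃ _ hx, le_abs_self M₃, Real.norm_eq_abs (m' (T + (√lam)⁻¹ * x))]
      · have hsq : lam * c * ((√lam)⁻¹ * x) ^ 2 = c * x ^ 2 := by
          rw [mul_pow, inv_pow, Real.sq_sqrt hlam.le]
          field_simp
        rw [sub_zero, hsq]
    · simp only [hg, indicator_of_notMem hx, norm_zero]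
      positivity
  · refine Filter.Eventually.of_forall fun x => ?_
    have hlim : Filter.Tendsto (fun lam : ℝ => T + (√lam)⁻¹ * x) Filter.atTop (nhds T) := by
      have := ((tendsto_inv_atTop_zero.comp Real.tendsto_sqrt_atTop).mul_const x).const_add T
      simpa using this
    set h : ℝ → ℂ := fun t =>
      (-((f' t : ℂ) * (t - T : ℝ) / vdcDen 1 x (m t)) +
        f t * (Complex.I * (x ^ 2 * (2 * m t + (t - T) * m' t) : ℝ)) / vdcDen 1 x (m t) ^ 2) *
        Complex.exp (Complex.I * (1 : ℝ) * (x ^ 2 * k t : ℝ)) with hh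
    have hcont : ContinuousOn h (Icc α β) := by
      have hden : ContinuousOn (fun t => vdcDen 1 x (m t)) (Icc α β) :=
        continuousOn_const.add (continuousOn_const.mul (hofReal (by fun_prop)))
      refine ContinuousOn.mul ?_ (continuousOn_exp_phase 1 (by fun_prop))
      have hu : ContinuousOn (fun t : ℝ => ((t - T : ℝ) : ℂ)) (Icc α β) := hofReal (by fun_prop)
      exact (((hofReal hf').mul hu).div hden (fun t _ => vdcDen_ne_zero _ _ _)).neg.add
        (((hofReal hfc).mul (continuousOn_const.mul (hofReal (by fun_prop)))).div (hden.pow 2)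
          (fun t _ => pow_ne_zero 2 (vdcDen_ne_zero _ _ _)))
    have hhT : h T = f T * (vdcAmp 1 x 1 0 (m T) 0 *
        Complex.exp (Complex.I * (1 : ℝ) * (x ^ 2 * k T : ℝ))) := by
      simp only [hh, vdcAmp]
      push_cast
      ring
    rw [← hhT]
    refine (((hcont.continuousAt hnhds).tendsto).comp hlim).congr' ?_
    filter_upwards [hev, hlim hnhds] with lam hlam hx
    have hx' : T + (√lam)⁻¹ * x ∈ Icc α β := hx
    have hsq : lam * ((√lam)⁻¹ * x) ^ 2 = x ^ 2 := by
      rw [mul_pow, inv_pow, Real.sq_sqrt hlam.le]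
      field_simp
    simp only [hg, indicator_of_mem hx', Function.comp_apply, hh, vdcAmp, hφk _ hx',
      add_sub_cancel_left, vdcDen_div_sqrt hlam, hsq]
    congr 2
    rw [mul_assoc, mul_assoc, ← Complex.ofReal_mul, ← Complex.ofReal_mul, one_mul, ← mul_assoc,
      hsq]

lemma hasDerivAt_integral_exp_phase {α β : ℝ} (hαβ : α ≤ β) {f φ : ℝ → ℝ}
    (hf : ContinuousOn f (Icc α β)) (hφ : ContinuousOn φ (Icc α β)) (lam : ℝ) :
    HasDerivAt (fun lam : ℝ => ∫ t in α..β, (f t : ℂ) * Complex.exp (Complex.I * lam * φ t))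
      (Complex.I * ∫ t in α..β, ((f t * φ t : ℝ) : ℂ) * Complex.exp (Complex.I * lam * φ t))
      lam := by
  have hofReal : ∀ {g : ℝ → ℝ}, ContinuousOn g (Icc α β) →
      ContinuousOn (fun t => (g t : ℂ)) (Icc α β) :=
    fun hg => Complex.continuous_ofReal.comp_continuousOn hg
  have hInt : ∀ {g : ℝ → ℂ} (lam : ℝ), ContinuousOn g (Icc α β) → IntervalIntegrable
      (fun t => g t * Complex.exp (Complex.I * lam * φ t)) volume α β := by
    intro g lam hg
    refine ContinuousOn.intervalIntegrable ?_
    rw [uIcc_of_le hαβ]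
    exact hg.mul (continuousOn_exp_phase lam hφ)
  obtain ⟨M, hM⟩ := isCompact_Icc.exists_bound_of_continuousOn (hf.mul hφ)
  have key := (intervalIntegral.hasDerivAt_integral_of_dominated_loc_of_deriv_le (μ := volume)
    (a := α) (b := β) (x₀ := lam) (s := univ)
    (F := fun (lam : ℝ) t => (f t : ℂ) * Complex.exp (Complex.I * lam * φ t))
    (F' := fun (lam : ℝ) t =>
      (Complex.I * (f t * φ t : ℝ)) * Complex.exp (Complex.I * lam * φ t))
    (bound := fun _ => M) Filter.univ_mem
    (Filter.Eventually.of_forall fun lam => (hInt lam (hofReal hf)).def'.aestronglyMeasurable)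
    (hInt lam (hofReal hf))
    (hInt lam (continuousOn_const.mul (hofReal (hf.mul hφ)))).def'.aestronglyMeasurable
    (Filter.Eventually.of_forall fun t ht lam _ => ?_) intervalIntegrable_const
    (Filter.Eventually.of_forall fun t ht lam _ => ?_)).2
  · refine key.congr_deriv ?_
    rw [← intervalIntegral.integral_const_mul]
    simp only [mul_assoc]
  · rw [uIoc_of_le hαβ] at ht
    rw [norm_mul, norm_exp_I_mul_real, mul_one, norm_mul, Complex.norm_I, one_mul,
      Complex.norm_real]
    exact hM t (Ioc_subset_Icc_self ht)
  · have h1 : HasDerivAt (fun lam : ℝ => Complex.I * lam * φ t) (Complex.I * φ t) lam := by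
      have := ((hasDerivAt_id lam).ofReal_comp.const_mul Complex.I).mul_const (φ t : ℂ)
      simpa using this
    refine (h1.cexp.const_mul (f t : ℂ)).congr_deriv ?_
    push_cast
    ring

/-- If `√λ F(λ)` tends to `L` and `F' + F/(2λ) = O(λ^{-5/2})`, then
`F = L λ^{-1/2} + O(λ^{-3/2})`. -/
lemma norm_sub_le_of_euler_ode {F F' : ℝ → ℂ} {L : ℂ} {B : ℝ}
    (hF : ∀ lam, 1 < lam → HasDerivAt F (F' lam) lam)
    (hode : ∀ lam, 1 < lam → ‖F' lam + F lam / (2 * lam)‖ ≤ B / (lam ^ 2 * √lam))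
    (hL : Filter.Tendsto (fun lam : ℝ => (√lam : ℂ) * F lam) Filter.atTop (nhds L))
    {lam : ℝ} (hlam : 1 < lam) : ‖F lam - L / √lam‖ ≤ B / (lam * √lam) := by
  have hd : ∀ x, 1 < x → HasDerivAt (fun x : ℝ => (√x : ℂ) * F x)
      (√x * (F' x + F x / (2 * x))) x := by
    intro x hx
    have hx0 : 0 < x := by linarith
    have hs : 0 < √x := Real.sqrt_pos.2 hx0
    refine ((Real.hasDerivAt_sqrt hx0.ne').ofReal_comp.mul (hF x hx)).congr_deriv ?_
    have hxs : (x : ℂ) = √x * √x := by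
      rw [← Complex.ofReal_mul, Real.mul_self_sqrt hx0.le]
    have hsc : (√x : ℂ) ≠ 0 := by exact_mod_cast hs.ne'
    rw [hxs]
    push_cast
    field_simp
    ring
  have hincr : ∀ y, lam ≤ y → ‖(√y : ℂ) * F y - √lam * F lam‖ ≤ B / lam - B / y := by
    intro y hy
    have hg : ∀ x ∈ Icc lam y, HasDerivAt (fun x : ℝ => B / lam - B / x) (B / x ^ 2) x := by
      intro x hx
      have hx0 : x ≠ 0 := by linarith [hx.1]
      have := (((hasDerivAt_inv hx0).const_mul B).const_sub (B / lam))
      simp only [← div_eq_mul_inv] at this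
      exact this.congr_deriv (by ring)
    refine image_norm_le_of_norm_deriv_right_le_deriv_boundary'
      (f := fun x : ℝ => (√x : ℂ) * F x - √lam * F lam) (a := lam) (b := y)
      (f' := fun x : ℝ => √x * (F' x + F x / (2 * x)))
      (B := fun x => B / lam - B / x) (B' := fun x => B / x ^ 2) ?_ ?_ ?_ ?_ ?_ ?_
      (right_mem_Icc.2 hy)
    · intro x hx
      exact ((hd x (by linarith [hx.1])).sub_const _).continuousAt.continuousWithinAt
    · intro x hx
      exact ((hd x (by linarith [hx.1])).sub_const _).hasDerivWithinAt
    · simp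
    · intro x hx
      exact (hg x hx).continuousAt.continuousWithinAt
    · intro x hx
      exact (hg x (Ico_subset_Icc_self hx)).hasDerivWithinAt
    · intro x hx
      have hx1 : 1 < x := by linarith [hx.1]
      have hs : 0 < √x := Real.sqrt_pos.2 (by linarith)
      rw [norm_mul, Complex.norm_real, Real.norm_of_nonneg hs.le]
      calc _ ≤ √x * (B / (x ^ 2 * √x)) := mul_le_mul_of_nonneg_left (hode x hx1) hs.le
        _ = B / x ^ 2 := by field_simp
  have hlim : ‖L - √lam * F lam‖ ≤ B / lam := by
    have h1 := (hL.sub_const ((√lam : ℂ) * F lam)).norm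
    have h2 : Filter.Tendsto (fun y : ℝ => B / lam - B / y) Filter.atTop (nhds (B / lam - 0)) :=
      tendsto_const_nhds.sub (tendsto_const_nhds.div_atTop Filter.tendsto_id)
    rw [sub_zero] at h2
    refine le_of_tendsto_of_tendsto h1 h2 ?_
    filter_upwards [Filter.eventually_ge_atTop lam] with y hy using hincr y hy
  have hs : 0 < √lam := Real.sqrt_pos.2 (by linarith)
  have hsc : (√lam : ℂ) ≠ 0 := by exact_mod_cast hs.ne'
  have he : F lam - L / √lam = -((L - √lam * F lam) / √lam) := by field_simp; ring
  rw [he, norm_neg, norm_div, Complex.norm_real, Real.norm_of_nonneg hs.le, ← div_div]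
  exact div_le_div_of_nonneg_right hlim hs.le

/-- Stationary phase with `O(λ^{-3/2})` remainder, uniformly over a family of phases `ψ i` that
vanish to second order at `T i`. -/
theorem stationary_phase {ι : Type*} {Ω K : Set ℝ} {α β : ℝ} (hΩ : IsOpen Ω) (hΩc : Convex ℝ Ω)
    (hK : IsClosed K) (hsub : Icc α β ⊆ Ω) (hαK : α ∉ K) (hβK : β ∉ K)
    {T s : ι → ℝ} (hT : ∀ i, T i ∈ Ioo α β) {R : ℝ} (hR : ∀ i, ∀ t ∈ Ω, |t - T i| ≤ R)
    (hs : ∀ i, s i = 1 ∨ s i = -1) {ψ p q : ι → ℝ → ℝ}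
    (hψ : ∀ i, ∀ t ∈ Ω, HasDerivAt (ψ i) (p i t) t)
    (hp : ∀ i, ∀ t ∈ Ω, HasDerivAt (p i) (q i t) t) (hq : UnifCk Ω 3 q)
    {c : ℝ} (hc : 0 < c) (hlow : ∀ i, ∀ t ∈ Ω, c ≤ s i * q i t)
    (hψT : ∀ i, ψ i (T i) = 0) (hpT : ∀ i, p i (T i) = 0)
    {f : ℝ → ℝ} (hf : UnifCk Ω 3 (fun _ : ι => f)) (hf0 : ∀ t ∈ Ω, t ∉ K → f t = 0) :
    ∃ B : ℝ, 0 ≤ B ∧ ∀ i, ∀ lam : ℝ, 1 < lam →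
      ‖(∫ t in α..β, (f t : ℂ) * Complex.exp (Complex.I * lam * ψ i t)) -
        f (T i) * (Complex.exp (Complex.I * s i * π / 4) * (√(2 * π) : ℝ) *
          (|q i (T i)| ^ (-(1 / 2 : ℝ)) : ℝ)) / √lam‖ ≤ B / (lam * √lam) := by
  rcases isEmpty_or_nonempty ι with hι | ⟨⟨i₀⟩⟩
  · exact ⟨0, le_rfl, fun i => hι.elim i⟩
  have hαβ : α ≤ β := ((hT i₀).1.trans (hT i₀).2).le
  have hαΩ : α ∈ Ω := hsub (left_mem_Icc.2 hαβ)
  have hβΩ : β ∈ Ω := hsub (right_mem_Icc.2 hαβ)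
  have hTΩ : ∀ i, T i ∈ Ω := fun i => hsub (Ioo_subset_Icc_self (hT i))
  -- `p = u m`, `ψ = u² k` and `k / m = g`, where `u = t - T`.
  set m : ι → ℝ → ℝ := fun i => segAvg (fun _ => 1) (q i) (T i) with hmdef
  set k : ι → ℝ → ℝ := fun i => segAvg (fun θ => θ) (m i) (T i) with hkdef
  have hm : UnifCk Ω 3 m := hq.segAvg hΩ hΩc hTΩ continuous_const
  have hk : UnifCk Ω 3 k := hm.segAvg hΩ hΩc hTΩ continuous_id
  have hpm : ∀ i, ∀ t ∈ Ω, p i t = (t - T i) * m i t := by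
    intro i t ht
    have := sub_eq_mul_segAvg hΩc (hp i) (hq.continuousOn i) (hTΩ i) ht
    rwa [hpT, sub_zero] at this
  have hpc : ∀ i, ContinuousOn (p i) Ω := fun i t ht =>
    (hp i t ht).continuousAt.continuousWithinAt
  have hψk : ∀ i, ∀ t ∈ Ω, ψ i t = (t - T i) ^ 2 * k i t := by
    intro i t ht
    have h := sub_eq_mul_segAvg hΩc (hψ i) (hpc i) (hTΩ i) ht
    rw [hψT, sub_zero] at h
    rw [h, pow_two, mul_assoc]
    congr 1
    rw [hkdef]
    simp only [segAvg]
    rw [← intervalIntegral.integral_const_mul]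
    refine intervalIntegral.integral_congr fun θ hθ => ?_
    rw [uIcc_of_le zero_le_one] at hθ
    rw [hpm i _ (segment_mem hΩc (hTΩ i) ht hθ)]
    ring
  have hmlow : ∀ i, ∀ t ∈ Ω, c ≤ |m i t| := by
    intro i t ht
    have h1 : c ≤ segAvg (fun _ => 1) (fun t => s i * q i t) (T i) t :=
      le_segAvg_one hΩc (continuousOn_const.mul (hq.continuousOn i)) (hlow i) (hTΩ i) ht
    have h2 : segAvg (fun _ => 1) (fun t => s i * q i t) (T i) t = s i * m i t := by
      simp [segAvg, hmdef]
    rw [h2] at h1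
    refine h1.trans ((le_abs_self _).trans (le_of_eq ?_))
    rcases hs i with h | h <;> simp [h]
  have hm0 : ∀ i, ∀ t ∈ Ω, m i t ≠ 0 := fun i t ht => abs_pos.1 (hc.trans_le (hmlow i t ht))
  have hmT : ∀ i, m i (T i) = q i (T i) := fun i => by simp [hmdef, segAvg_self]
  have hkT : ∀ i, k i (T i) = q i (T i) / 2 := fun i => by
    rw [hkdef]
    simp only [segAvg_self, hmT, integral_id]
    ring
  have hψm : ∀ i, ∀ t ∈ Ω, HasDerivAt (ψ i) ((t - T i) * m i t) t := fun i t ht => by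
    rw [← hpm i t ht]
    exact hψ i t ht
  have hminv := hm.inv hc hmlow
  set g : ι → ℝ → ℝ := fun i t => k i t * (m i t)⁻¹ with hgdef
  have hg : UnifCk Ω 3 g := hk.mul hminv
  have hgT : ∀ i, g i (T i) = 1 / 2 := fun i => by
    have := hm0 i _ (hTΩ i)
    simp only [hgdef, hkT, ← hmT]
    field_simp
  obtain ⟨-, g', hg', hg''⟩ := id hg
  set G : ι → ℝ → ℝ := fun i => segAvg (fun _ => 1) (g' i) (T i) with hGdef
  have hG : UnifCk Ω 2 G := hg''.segAvg hΩ hΩc hTΩ continuous_const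
  have hgG : ∀ i, ∀ t ∈ Ω, g i t = 1 / 2 + (t - T i) * G i t := by
    intro i t ht
    have := sub_eq_mul_segAvg hΩc (hg' i) (hg''.continuousOn i) (hTΩ i) ht
    rw [hgT] at this
    rw [hGdef]
    linarith
  obtain ⟨-, f', hf', hf''⟩ := id hf
  have hf'0 : ∀ i, ∀ t ∈ Ω, t ∉ K → f' i t = 0 := fun i =>
    deriv_eq_zero_of_eqOn_zero hΩ hK (hf' i) hf0
  -- The amplitude left over after one integration by parts is `u n`, with `n = m h`.
  set h : ι → ℝ → ℝ := fun i t =>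
    (f' i t * g i t + f t * (G i t + g' i t)) * (m i t)⁻¹ with hhdef
  have hh : UnifCk Ω 2 h :=
    ((hf''.mul hg.of_succ).add (hf.of_succ.mul (hG.add hg''))).mul hminv.of_succ
  have hh0 : ∀ i, ∀ t ∈ Ω, t ∉ K → h i t = 0 := fun i t ht htK => by
    simp [hhdef, hf'0 i t ht htK, hf0 t ht htK]
  obtain ⟨-, h', hh', hh''⟩ := hh
  have hh'0 : ∀ i, ∀ t ∈ Ω, t ∉ K → h' i t = 0 := fun i =>
    deriv_eq_zero_of_eqOn_zero hΩ hK (hh' i) (hh0 i)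
  obtain ⟨B, hB0, hB⟩ := vanDerCorput hαβ hsub hαK hβK hR (hm.of_le (by norm_num)) hc hmlow hψm
    hh'' hh'0
  refine ⟨B, hB0, fun i lam hlam => ?_⟩
  have hfc := hf.continuousOn i
  have hψc : ContinuousOn (ψ i) Ω := fun t ht => (hψ i t ht).continuousAt.continuousWithinAt
  refine norm_sub_le_of_euler_ode (fun lam _ => hasDerivAt_integral_exp_phase hαβ (hfc.mono hsub)
    (hψc.mono hsub) lam) (fun lam hlam => ?_) ?_ hlam
  · have hlam0 : 0 < lam := by linarith
    have hlc : (lam : ℂ) ≠ 0 := by exact_mod_cast hlam0.ne'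
    have hInt : ∀ {g : ℝ → ℝ}, ContinuousOn g Ω → IntervalIntegrable
        (fun t => (g t : ℂ) * Complex.exp (Complex.I * lam * ψ i t)) volume α β := by
      intro g hg
      refine ContinuousOn.intervalIntegrable ?_
      rw [uIcc_of_le hαβ]
      exact (Complex.continuous_ofReal.comp_continuousOn (hg.mono hsub)).mul
        (continuousOn_exp_phase lam (hψc.mono hsub))
    -- First integration by parts.
    set A₁' : ℝ → ℝ := fun t => h i t * p i t + f t * (1 / 2) with hA₁'
    have hA₁ : ∀ t ∈ Ω, HasDerivAt (fun t => f t * ((t - T i) * g i t)) (A₁' t) t := by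
      intro t ht
      have hu : HasDerivAt (fun t => t - T i) 1 t := (hasDerivAt_id t).sub_const (T i)
      refine ((hf' i t ht).mul (hu.mul (hg' i t ht))).congr_deriv ?_
      have := hm0 i t ht
      have hgG' := hgG i t ht
      simp only [hA₁', hhdef, hpm i t ht, Pi.mul_apply]
      field_simp
      rw [hgG']
      ring
    have hhc : ContinuousOn (h i) Ω := fun t ht => (hh' i t ht).continuousAt.continuousWithinAt
    have hhp : ContinuousOn (fun t => h i t * p i t) Ω := hhc.mul (hpc i)
    have hA₁'c : ContinuousOn A₁' Ω := hhp.add (hfc.mul continuousOn_const)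
    have e1 := integral_mul_deriv_phase hαβ (fun t ht => hA₁ t (hsub ht)) (hA₁'c.mono hsub)
      (fun t ht => hψ i t (hsub ht)) ((hpc i).mono hsub)
      (by simp [hf0 α hαΩ hαK]) (by simp [hf0 β hβΩ hβK]) hlam0.ne'
    have e2 := integral_mul_deriv_phase hαβ (fun t ht => hh' i t (hsub ht))
      ((hh''.continuousOn i).mono hsub)
      (fun t ht => hψ i t (hsub ht)) ((hpc i).mono hsub)
      (hh0 i α hαΩ hαK) (hh0 i β hβΩ hβK) hlam0.ne'
    have e3 : ∫ t in α..β, ((f t * ψ i t : ℝ) : ℂ) * Complex.exp (Complex.I * lam * ψ i t) =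
        ∫ t in α..β, ((f t * ((t - T i) * g i t) * p i t : ℝ) : ℂ) *
          Complex.exp (Complex.I * lam * ψ i t) := by
      refine intervalIntegral.integral_congr fun t ht => ?_
      rw [uIcc_of_le hαβ] at ht
      have ht' := hsub ht
      have := hm0 i t ht'
      have e : f t * ψ i t = f t * ((t - T i) * g i t) * p i t := by
        simp only [hpm i t ht', hgdef]
        rw [hψk i t ht']
        field_simp
      simp only [e]
    have e4 : ∫ t in α..β, (A₁' t : ℂ) * Complex.exp (Complex.I * lam * ψ i t) =
        (∫ t in α..β, ((h i t * p i t : ℝ) : ℂ) * Complex.exp (Complex.I * lam * ψ i t)) +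
        1 / 2 * ∫ t in α..β, (f t : ℂ) * Complex.exp (Complex.I * lam * ψ i t) := by
      rw [← intervalIntegral.integral_const_mul,
        ← intervalIntegral.integral_add (hInt hhp) ((hInt hfc).const_mul _)]
      refine intervalIntegral.integral_congr fun t _ => ?_
      simp only [hA₁']
      push_cast
      ring
    rw [e3, e1, e4, e2]
    have e5 : ∀ X Y : ℂ, Complex.I * (Complex.I / lam * (Complex.I / lam * X + 1 / 2 * Y)) +
        Y / (2 * lam) = -Complex.I / lam ^ 2 * X := by
      intro X Y
      field_simp
      linear_combination (Complex.I * X * 2 + Y * lam) * Complex.I_sq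
    rw [e5, norm_mul, norm_div, norm_neg, Complex.norm_I, norm_pow, Complex.norm_real,
      Real.norm_of_nonneg hlam0.le]
    calc _ ≤ 1 / lam ^ 2 * (B / √lam) :=
          mul_le_mul_of_nonneg_left (hB i lam hlam) (by positivity)
      _ = B / (lam ^ 2 * √lam) := by field_simp
  · obtain ⟨-, m', hm', hm''⟩ := hm
    have hqT : q i (T i) = s i * |q i (T i)| := by
      have := hlow i _ (hTΩ i)
      rcases hs i with h | h <;> rw [h] at this ⊢
      · rw [abs_of_pos (by linarith), one_mul]
      · rw [abs_of_neg (by linarith)]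
        ring
    have hqpos : 0 < |q i (T i)| := by
      rw [← hmT]
      exact hc.trans_le (hmlow i _ (hTΩ i))
    have hlim := tendsto_sqrt_mul_integral (hT i) (fun t ht => hf' i t (hsub ht))
      ((hf''.continuousOn i).mono hsub) (fun t ht => hm' i t (hsub ht))
      ((hm''.continuousOn i).mono hsub) hc (fun t ht => hmlow i t (hsub ht))
      (fun t ht => hψm i t (hsub ht)) ((hk.continuousOn i).mono hsub)
      (fun t ht => hψk i t (hsub ht)) (hf0 α hαΩ hαK) (hf0 β hβΩ hβK)
    rw [hkT, hmT, hqT, integral_fresnel (hs i) hqpos] at hlim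
    exact hlim

section Families

variable {ι : Type*}

lemma hasDerivAt_iteratedDerivWithin_Icc {Q : ℝ → ℝ} {a b t : ℝ} {N j : ℕ}
    (hQ : ContDiffOn ℝ N Q (Icc a b)) (hj : j < N) (ht : t ∈ Ioo a b) :
    HasDerivAt (iteratedDerivWithin j Q (Icc a b))
      (iteratedDerivWithin (j + 1) Q (Icc a b) t) t := by
  have hab : a < b := ht.1.trans ht.2
  have h := hQ.differentiableOn_iteratedDerivWithin (m := j) (by exact_mod_cast hj)
    (uniqueDiffOn_Icc hab) t (Ioo_subset_Icc_self ht)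
  rw [iteratedDerivWithin_succ]
  exact h.hasDerivWithinAt.hasDerivAt (Icc_mem_nhds ht.1 ht.2)

lemma unifCk_iteratedDerivWithin {Q : ι → ℝ → ℝ} {a b C : ℝ} {N : ℕ} (hab : a < b)
    (hQ : ∀ i, ContDiffOn ℝ N (Q i) (Icc a b))
    (hC : ∀ i, ∀ k ≤ N, ∀ t ∈ Icc a b, |iteratedDerivWithin k (Q i) (Icc a b) t| ≤ C)
    {n j : ℕ} (h : j + n ≤ N) :
    UnifCk (Ioo a b) n (fun i => iteratedDerivWithin j (Q i) (Icc a b)) := by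
  induction n generalizing j with
  | zero =>
    exact ⟨⟨C, fun i t ht => hC i j h t (Ioo_subset_Icc_self ht)⟩, fun i =>
      ((hQ i).continuousOn_iteratedDerivWithin (by exact_mod_cast h)
        (uniqueDiffOn_Icc hab)).mono Ioo_subset_Icc_self⟩
  | succ n ih =>
    exact ⟨⟨C, fun i t ht => hC i j (by omega) t (Ioo_subset_Icc_self ht)⟩, _,
      fun i t ht => hasDerivAt_iteratedDerivWithin_Icc (hQ i) (by omega) ht, ih (by omega)⟩

lemma unifCk_of_hasCompactSupport {f : ℝ → ℝ} (hf : ContDiff ℝ (⊤ : ℕ∞) f)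
    (hc : HasCompactSupport f) (Ω : Set ℝ) (n : ℕ) : UnifCk Ω n (fun _ : ι => f) := by
  obtain ⟨M, hM⟩ := hc.exists_bound_of_continuous hf.continuous
  induction n generalizing f M with
  | zero => exact ⟨⟨M, fun _ t _ => hM t⟩, fun _ => hf.continuous.continuousOn⟩
  | succ n ih =>
    have hf' : ContDiff ℝ (⊤ : ℕ∞) (deriv f) := (contDiff_infty_iff_deriv.1 hf).2
    obtain ⟨M', hM'⟩ := hc.deriv.exists_bound_of_continuous hf'.continuous
    exact ⟨⟨M, fun _ t _ => hM t⟩, fun _ => deriv f,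
      fun _ t _ => ((contDiff_infty_iff_deriv.1 hf).1 t).hasDerivAt, ih hf' hc.deriv M' hM'⟩

end Families

lemma integral_Ioi_mul_eq {f : ℝ → ℝ} {a b α β : ℝ} (hf : tsupport f ⊆ Icc a b) (hα : 0 ≤ α)
    (hαa : α < a) (hbβ : b ≤ β) (hαβ : α ≤ β) (g : ℝ → ℂ) :
    ∫ t in Ioi (0 : ℝ), (f t : ℂ) * g t = ∫ t in α..β, (f t : ℂ) * g t := by
  rw [intervalIntegral.integral_of_le hαβ]
  refine setIntegral_eq_of_subset_of_forall_sdiff_eq_zero measurableSet_Ioi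
    (fun t ht => hα.trans_lt ht.1) fun t ht => ?_
  have h0 : f t = 0 := by
    by_contra h
    have h' := hf (subset_tsupport f h)
    exact ht.2 ⟨hαa.trans_le h'.1, h'.2.trans hbβ⟩
  simp [h0]

/-- The class of phases under consideration, on the interval `[1/4, 4]`. -/
structure AdmissiblePhase (N : ℕ) (C₁ c₁ : ℝ) (Q : ℝ → ℝ) : Prop where
  contDiffOn : ContDiffOn ℝ N Q (Icc (1 / 4 : ℝ) 4)
  bound : ∀ k ≤ N, ∀ t ∈ Icc (1 / 4 : ℝ) 4,
    |iteratedDerivWithin k Q (Icc (1 / 4 : ℝ) 4) t| ≤ C₁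
  lower : ∀ t ∈ Icc (1 / 4 : ℝ) 4, c₁ ≤ |iteratedDerivWithin 2 Q (Icc (1 / 4 : ℝ) 4) t|

namespace AdmissiblePhase

variable {N : ℕ} {C₁ c₁ : ℝ} {Q : ℝ → ℝ}

lemma hasDerivAt (h : AdmissiblePhase N C₁ c₁ Q) (hN : 5 ≤ N) {t : ℝ}
    (ht : t ∈ Ioo (1 / 4 : ℝ) 4) :
    HasDerivAt Q (derivWithin Q (Icc (1 / 4 : ℝ) 4) t) t := by
  have := hasDerivAt_iteratedDerivWithin_Icc h.contDiffOn (j := 0) (by omega) ht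
  simpa [iteratedDerivWithin_one] using this

lemma hasDerivAt_derivWithin (h : AdmissiblePhase N C₁ c₁ Q) (hN : 5 ≤ N) {t : ℝ}
    (ht : t ∈ Ioo (1 / 4 : ℝ) 4) :
    HasDerivAt (derivWithin Q (Icc (1 / 4 : ℝ) 4))
      (iteratedDerivWithin 2 Q (Icc (1 / 4 : ℝ) 4) t) t := by
  have := hasDerivAt_iteratedDerivWithin_Icc h.contDiffOn (j := 1) (by omega) ht
  rwa [iteratedDerivWithin_one] at this

/-- The second derivative has constant sign. -/
lemma exists_sign (h : AdmissiblePhase N C₁ c₁ Q) (hN : 5 ≤ N) (hc₁ : 0 < c₁) :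
    ∃ s : ℝ, (s = 1 ∨ s = -1) ∧ ∀ t ∈ Icc (1 / 4 : ℝ) 4,
      c₁ ≤ s * iteratedDerivWithin 2 Q (Icc (1 / 4 : ℝ) 4) t := by
  set q := iteratedDerivWithin 2 Q (Icc (1 / 4 : ℝ) 4)
  have hq : ContinuousOn q (Icc (1 / 4 : ℝ) 4) :=
    h.contDiffOn.continuousOn_iteratedDerivWithin (by exact_mod_cast (by omega : 2 ≤ N))
      (uniqueDiffOn_Icc (by norm_num))
  by_cases hpos : ∀ t ∈ Icc (1 / 4 : ℝ) 4, 0 ≤ q t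
  · refine ⟨1, Or.inl rfl, fun t ht => ?_⟩
    have := h.lower t ht
    rwa [abs_of_nonneg (hpos t ht), ← one_mul (q t)] at this
  · push Not at hpos
    obtain ⟨x, hx, hqx⟩ := hpos
    refine ⟨-1, Or.inr rfl, fun t ht => ?_⟩
    have hqt : q t ≤ 0 := by
      by_contra! hcon
      obtain ⟨y, hy, hy0⟩ := isPreconnected_Icc.intermediate_value hx ht hq
        (⟨hqx.le, hcon.le⟩ : (0 : ℝ) ∈ Icc (q x) (q t))
      have := h.lower y hy
      change c₁ ≤ |q y| at this
      rw [hy0, abs_zero] at this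
      exact absurd this (not_le.2 hc₁)
    have := h.lower t ht
    rwa [abs_of_nonpos hqt, neg_eq_neg_one_mul] at this

lemma mul_sub_le_derivWithin_sub (h : AdmissiblePhase N C₁ c₁ Q) (hN : 5 ≤ N) {s : ℝ}
    (hs : ∀ t ∈ Icc (1 / 4 : ℝ) 4, c₁ ≤ s * iteratedDerivWithin 2 Q (Icc (1 / 4 : ℝ) 4) t)
    {x y : ℝ} (hx : x ∈ Ioo (1 / 4 : ℝ) 4) (hy : y ∈ Ioo (1 / 4 : ℝ) 4) (hxy : x ≤ y) :
    c₁ * (y - x) ≤ s * derivWithin Q (Icc (1 / 4 : ℝ) 4) y -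
      s * derivWithin Q (Icc (1 / 4 : ℝ) 4) x := by
  have hd : ∀ t ∈ Ioo (1 / 4 : ℝ) 4, HasDerivAt (fun t => s * derivWithin Q (Icc (1 / 4 : ℝ) 4) t)
      (s * iteratedDerivWithin 2 Q (Icc (1 / 4 : ℝ) 4) t) t := fun t ht =>
    (h.hasDerivAt_derivWithin hN ht).const_mul s
  refine (convex_Ioo (1 / 4 : ℝ) 4).mul_sub_le_image_sub_of_le_deriv
    (fun t ht => (hd t ht).continuousAt.continuousWithinAt)
    (fun t ht => (hd t (interior_subset ht)).differentiableAt.differentiableWithinAt)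
    (fun t ht => ?_) x hx y hy hxy
  rw [(hd t (interior_subset ht)).deriv]
  exact hs t (Ioo_subset_Icc_self (interior_subset ht))

lemma injOn_derivWithin (h : AdmissiblePhase N C₁ c₁ Q) (hN : 5 ≤ N) (hc₁ : 0 < c₁) :
    InjOn (derivWithin Q (Icc (1 / 4 : ℝ) 4)) (Ioo (1 / 4 : ℝ) 4) := by
  obtain ⟨s, -, hs⟩ := h.exists_sign hN hc₁
  have key : ∀ x ∈ Ioo (1 / 4 : ℝ) 4, ∀ y ∈ Ioo (1 / 4 : ℝ) 4, derivWithin Q (Icc (1 / 4 : ℝ) 4) x =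
      derivWithin Q (Icc (1 / 4 : ℝ) 4) y → x ≤ y → x = y := by
    intro x hx y hy hxy hle
    have := h.mul_sub_le_derivWithin_sub hN hs hx hy hle
    rw [hxy, sub_self] at this
    nlinarith
  intro x hx y hy hxy
  rcases le_total x y with hle | hle
  · exact key x hx y hy hxy hle
  · exact (key y hy x hx hxy.symm hle).symm

/-- A left inverse of `Q'` on `(1/4, 4)` is `N - 1` times continuously differentiable at the
values taken by `Q'`. -/
lemma contDiffAt_leftInverse (h : AdmissiblePhase N C₁ c₁ Q) (hN : 5 ≤ N) (hc₁ : 0 < c₁)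
    {g : ℝ → ℝ} (hg : ∀ t ∈ Ioo (1 / 4 : ℝ) 4, g (derivWithin Q (Icc (1 / 4 : ℝ) 4) t) = t)
    {t : ℝ} (ht : t ∈ Ioo (1 / 4 : ℝ) 4) :
    ContDiffAt ℝ (N - 1 : ℕ) g (derivWithin Q (Icc (1 / 4 : ℝ) 4) t) := by
  set p := derivWithin Q (Icc (1 / 4 : ℝ) 4) with hpdef
  set q := iteratedDerivWithin 2 Q (Icc (1 / 4 : ℝ) 4) with hqdef
  have hpc : ContDiffAt ℝ (N - 1 : ℕ) p t := by
    have : ContDiffOn ℝ (N - 1 : ℕ) p (Icc (1 / 4 : ℝ) 4) :=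
      h.contDiffOn.derivWithin (uniqueDiffOn_Icc (by norm_num))
        (by exact_mod_cast (by omega : N - 1 + 1 ≤ N))
    exact this.contDiffAt (Icc_mem_nhds ht.1 ht.2)
  have hq0 : q t ≠ 0 := abs_pos.1 (hc₁.trans_le (h.lower t (Ioo_subset_Icc_self ht)))
  have hd : HasDerivAt p (q t) t := h.hasDerivAt_derivWithin hN ht
  have hn : ((N - 1 : ℕ) : WithTop ℕ∞) ≠ 0 := by exact_mod_cast (by omega : N - 1 ≠ 0)
  have hfd := hd.hasFDerivAt_equiv hq0
  have hinv := hpc.to_localInverse hfd hn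
  refine hinv.congr_of_eventuallyEq ?_
  have hstrict := hpc.hasStrictFDerivAt' hfd hn
  filter_upwards [hstrict.eventually_right_inverse,
    hstrict.localInverse_continuousAt.eventually
      (by rw [hstrict.localInverse_apply_image]; exact isOpen_Ioo.mem_nhds ht)] with v hv hv'
  have := hg _ hv'
  rw [hv] at this
  exact this

end AdmissiblePhase

/-- Uniform decay of the oscillatory integral when `Q'` stays away from `v` on the support of
the amplitude. -/
lemma exists_bound_of_nonstationary {ρ : ℝ → ℝ} (hρ : ContDiff ℝ (⊤ : ℕ∞) ρ)
    (hρsupp : tsupport ρ ⊆ Icc (1 / 2 : ℝ) 2) {N : ℕ} (hN : 5 ≤ N) {C₁ c₁ : ℝ} (hC₁ : 1 ≤ C₁)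
    (hc₁ : 0 < c₁) (V : ℝ) :
    ∃ B : ℝ, 0 ≤ B ∧ ∀ Q, AdmissiblePhase N C₁ c₁ Q → ∀ v : ℝ, |v| ≤ V →
      (∀ t ∈ Icc (1 / 2 : ℝ) 2, c₁ / 12 ≤ |derivWithin Q (Icc (1 / 4 : ℝ) 4) t - v|) →
      ∀ lam : ℝ, 1 < lam →
        ‖∫ t in Ioi (0 : ℝ), (ρ t : ℂ) * Complex.exp (Complex.I * lam * (Q t - v * t : ℝ))‖ ≤
          B / lam ^ (N - 1) := by
  have hρc : HasCompactSupport ρ := isCompact_Icc.of_isClosed_subset (isClosed_tsupport ρ) hρsupp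
  obtain ⟨ε, hε0, hε8, hεc⟩ : ∃ ε : ℝ, 0 < ε ∧ ε ≤ 1 / 8 ∧ C₁ * ε ≤ c₁ / 24 := by
    have hC0 : 0 < C₁ := by linarith
    refine ⟨min (1 / 8) (c₁ / 24 / C₁), by positivity, min_le_left _ _, ?_⟩
    calc C₁ * min (1 / 8) (c₁ / 24 / C₁) ≤ C₁ * (c₁ / 24 / C₁) := by gcongr; exact min_le_right _ _
      _ = c₁ / 24 := by field_simp
  let ι := {x : (ℝ → ℝ) × ℝ // AdmissiblePhase N C₁ c₁ x.1 ∧ |x.2| ≤ V ∧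
    ∀ t ∈ Icc (1 / 2 : ℝ) 2, c₁ / 12 ≤ |derivWithin x.1 (Icc (1 / 4 : ℝ) 4) t - x.2|}
  have hΩsub : Ioo (1 / 2 - ε) (2 + ε) ⊆ Ioo (1 / 4 : ℝ) 4 :=
    Ioo_subset_Ioo (by linarith) (by linarith)
  have hψ : ∀ i : ι, ∀ t ∈ Ioo (1 / 2 - ε) (2 + ε), HasDerivAt (fun t => i.1.1 t - i.1.2 * t)
      (derivWithin i.1.1 (Icc (1 / 4 : ℝ) 4) t + -i.1.2) t := fun i t ht => by
    have := (i.2.1.hasDerivAt hN (hΩsub ht)).sub ((hasDerivAt_id t).const_mul i.1.2)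
    rwa [mul_one, sub_eq_add_neg] at this
  have hp : UnifCk (Ioo (1 / 2 - ε) (2 + ε)) (N - 1)
      (fun (i : ι) t => derivWithin i.1.1 (Icc (1 / 4 : ℝ) 4) t + -i.1.2) := by
    have h1 := (unifCk_iteratedDerivWithin (Q := fun i : ι => i.1.1) (by norm_num)
      (fun i => i.2.1.contDiffOn) (fun i => i.2.1.bound) (n := N - 1) (j := 1)
      (by omega)).mono hΩsub
    simp only [iteratedDerivWithin_one] at h1
    exact h1.add (UnifCk.const (M := V) fun i => by rw [abs_neg]; exact i.2.2.1)
  have hlow : ∀ i : ι, ∀ t ∈ Ioo (1 / 2 - ε) (2 + ε),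
      c₁ / 24 ≤ |derivWithin i.1.1 (Icc (1 / 4 : ℝ) 4) t + -i.1.2| := by
    intro i t ht
    obtain ⟨t', ht', htt'⟩ : ∃ t' ∈ Icc (1 / 2 : ℝ) 2, |t - t'| ≤ ε := by
      rcases le_total t (1 / 2) with h | h
      · exact ⟨1 / 2, by norm_num, abs_le.2 ⟨by linarith [ht.1], by linarith⟩⟩
      rcases le_total t 2 with h2 | h2
      · exact ⟨t, ⟨h, h2⟩, by simpa using hε0.le⟩
      · exact ⟨2, by norm_num, abs_le.2 ⟨by linarith, by linarith [ht.2]⟩⟩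
    have ht'Ω : t' ∈ Ioo (1 / 4 : ℝ) 4 := ⟨by linarith [ht'.1], by linarith [ht'.2]⟩
    have hmv := (convex_Ioo (1 / 4 : ℝ) 4).norm_image_sub_le_of_norm_hasDerivWithin_le
      (fun x hx => (i.2.1.hasDerivAt_derivWithin hN hx).hasDerivWithinAt)
      (fun x hx => i.2.1.bound 2 (by omega) x (Ioo_subset_Icc_self hx)) ht'Ω (hΩsub ht)
    rw [norm_eq_abs, norm_eq_abs] at hmv
    have h1 := i.2.2.2 t' ht'
    have h2 : C₁ * |t - t'| ≤ c₁ / 24 := by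
      refine le_trans ?_ hεc
      gcongr
    have h3 := abs_sub_abs_le_abs_sub (derivWithin i.1.1 (Icc (1 / 4 : ℝ) 4) t' - i.1.2)
      (derivWithin i.1.1 (Icc (1 / 4 : ℝ) 4) t - i.1.2)
    rw [sub_sub_sub_cancel_right, abs_sub_comm (derivWithin i.1.1 _ t')
      (derivWithin i.1.1 _ t)] at h3
    rw [← sub_eq_add_neg]
    linarith
  obtain ⟨B, hB0, hB⟩ := nonstationary_phase (K := Icc (1 / 2 : ℝ) 2) (α := 1 / 2 - ε / 2)
    (β := 2 + ε / 2) isOpen_Ioo isClosed_Icc (by linarith)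
    (Icc_subset_Ioo (by linarith) (by linarith)) (fun h => by linarith [h.1])
    (fun h => by linarith [h.2]) hψ (by positivity) hlow (N - 1) hp (fun _ : ι => ρ)
    (unifCk_of_hasCompactSupport hρ hρc _ _)
    (fun _ t _ ht => image_eq_zero_of_notMem_tsupport fun h => ht (hρsupp h))
  refine ⟨B, hB0, fun Q hQ v hv hQv lam hlam => ?_⟩
  rw [integral_Ioi_mul_eq hρsupp (α := 1 / 2 - ε / 2) (β := 2 + ε / 2) (by linarith) (by linarith)
    (by linarith) (by linarith)]
  exact hB ⟨(Q, v), hQ, hv, hQv⟩ lam hlam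

/-- Uniform leading asymptotics of the oscillatory integral when `Q' = v` at a point of
`[1/3, 13/6]`. -/
lemma exists_bound_of_stationary {ρ : ℝ → ℝ} (hρ : ContDiff ℝ (⊤ : ℕ∞) ρ)
    (hρsupp : tsupport ρ ⊆ Icc (1 / 2 : ℝ) 2) {N : ℕ} (hN : 5 ≤ N) {C₁ c₁ : ℝ} (hc₁ : 0 < c₁) :
    ∃ B : ℝ, 0 ≤ B ∧ ∀ Q, AdmissiblePhase N C₁ c₁ Q → ∀ s : ℝ, (s = 1 ∨ s = -1) →
      (∀ t ∈ Icc (1 / 4 : ℝ) 4, c₁ ≤ s * iteratedDerivWithin 2 Q (Icc (1 / 4 : ℝ) 4) t) →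
      ∀ T ∈ Icc (1 / 3 : ℝ) (13 / 6), ∀ v : ℝ, derivWithin Q (Icc (1 / 4 : ℝ) 4) T = v →
      ∀ lam : ℝ, 1 < lam →
        ‖(∫ t in Ioi (0 : ℝ), (ρ t : ℂ) * Complex.exp (Complex.I * lam * (Q t - v * t : ℝ))) -
          ρ T * (Complex.exp (Complex.I * s * π / 4) * (√(2 * π) : ℝ) *
            (|iteratedDerivWithin 2 Q (Icc (1 / 4 : ℝ) 4) T| ^ (-(1 / 2 : ℝ)) : ℝ)) / √lam *
            Complex.exp (Complex.I * lam * (Q T - v * T : ℝ))‖ ≤ B / (lam * √lam) := by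
  have hρc : HasCompactSupport ρ := isCompact_Icc.of_isClosed_subset (isClosed_tsupport ρ) hρsupp
  let ι := {x : (ℝ → ℝ) × ℝ × ℝ // AdmissiblePhase N C₁ c₁ x.1 ∧ (x.2.1 = 1 ∨ x.2.1 = -1) ∧
    (∀ t ∈ Icc (1 / 4 : ℝ) 4, c₁ ≤ x.2.1 * iteratedDerivWithin 2 x.1 (Icc (1 / 4 : ℝ) 4) t) ∧
    x.2.2 ∈ Icc (1 / 3 : ℝ) (13 / 6)}
  obtain ⟨B, hB0, hB⟩ := stationary_phase (ι := ι) (Ω := Ioo (1 / 4 : ℝ) 4)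
    (K := Icc (1 / 2 : ℝ) 2) (α := 3 / 10) (β := 3) (T := fun i => i.1.2.2) (s := fun i => i.1.2.1)
    (R := 4)
    (ψ := fun i t => i.1.1 t - derivWithin i.1.1 (Icc (1 / 4 : ℝ) 4) i.1.2.2 * t -
      (i.1.1 i.1.2.2 - derivWithin i.1.1 (Icc (1 / 4 : ℝ) 4) i.1.2.2 * i.1.2.2))
    (p := fun i t => derivWithin i.1.1 (Icc (1 / 4 : ℝ) 4) t -
      derivWithin i.1.1 (Icc (1 / 4 : ℝ) 4) i.1.2.2)
    (q := fun i => iteratedDerivWithin 2 i.1.1 (Icc (1 / 4 : ℝ) 4))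
    isOpen_Ioo (convex_Ioo _ _) isClosed_Icc (Icc_subset_Ioo (by norm_num) (by norm_num))
    (by norm_num) (by norm_num)
    (fun i => ⟨by linarith [i.2.2.2.2.1], by linarith [i.2.2.2.2.2]⟩)
    (fun i t ht => abs_le.2 ⟨by linarith [i.2.2.2.2.2, ht.1], by linarith [i.2.2.2.2.1, ht.2]⟩)
    (fun i => i.2.2.1)
    (fun i t ht => by
      have := ((i.2.1.hasDerivAt hN ht).sub ((hasDerivAt_id t).const_mul
        (derivWithin i.1.1 (Icc (1 / 4 : ℝ) 4) i.1.2.2))).sub_const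
        (i.1.1 i.1.2.2 - derivWithin i.1.1 (Icc (1 / 4 : ℝ) 4) i.1.2.2 * i.1.2.2)
      rwa [mul_one] at this)
    (fun i t ht => (i.2.1.hasDerivAt_derivWithin hN ht).sub_const _)
    (unifCk_iteratedDerivWithin (by norm_num) (fun i => i.2.1.contDiffOn) (fun i => i.2.1.bound)
      (by omega))
    hc₁ (fun i t ht => i.2.2.2.1 t (Ioo_subset_Icc_self ht)) (fun i => sub_self _)
    (fun i => sub_self _) (unifCk_of_hasCompactSupport hρ hρc _ _)
    (fun t _ ht => image_eq_zero_of_notMem_tsupport fun h => ht (hρsupp h))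
  refine ⟨B, hB0, fun Q hQ s hs hsQ T hT v hv lam hlam => ?_⟩
  have h := hB ⟨(Q, s, T), hQ, hs, hsQ, hT⟩ lam hlam
  simp only [hv] at h
  rw [integral_Ioi_mul_eq hρsupp (α := 3 / 10) (β := 3) (by norm_num) (by norm_num)
    (by norm_num) (by norm_num)]
  set E := Complex.exp (Complex.I * lam * (Q T - v * T : ℝ)) with hE
  have hsplit : ∀ t : ℝ, (ρ t : ℂ) * Complex.exp (Complex.I * lam * (Q t - v * t : ℝ)) =
      (ρ t : ℂ) * Complex.exp (Complex.I * lam * (Q t - v * t - (Q T - v * T) : ℝ)) * E := by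
    intro t
    rw [hE, mul_assoc (ρ t : ℂ), ← Complex.exp_add]
    congr 2
    push_cast
    ring
  simp only [hsplit]
  rw [intervalIntegral.integral_mul_const, ← sub_mul, norm_mul]
  rwa [hE, norm_exp_I_mul_real, mul_one]

lemma oscI_eq (ρ Q : ℝ → ℝ) (A lam ξ η : ℝ) :
    oscI ρ Q A lam ξ η = Set.indicator (Set.Icc (-A) A) (fun _ => (1 : ℂ)) (ξ / η) *
      ∫ t in Ioi (0 : ℝ),
        (ρ t : ℂ) * Complex.exp (Complex.I * lam * (Q t - -ξ / η * t : ℝ)) := by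
  have : ∀ t, phaseQ Q t ξ η = Q t - -ξ / η * t := fun t => by rw [phaseQ]; ring
  simp only [oscI, this]

lemma norm_indicator_one_le (S : Set ℝ) (x : ℝ) : ‖S.indicator (fun _ => (1 : ℂ)) x‖ ≤ 1 := by
  simpa using norm_indicator_le_norm_self (s := S) (fun _ => (1 : ℂ)) x

namespace AdmissiblePhase

variable {N : ℕ} {C₁ c₁ : ℝ} {Q : ℝ → ℝ}

/-- Either `Q'` attains on `[1/3, 13/6]` every value in `S`, or it stays away from `S`
on `[1/2, 2]`. -/
lemma dichotomy (h : AdmissiblePhase N C₁ c₁ Q) (hN : 5 ≤ N) {s : ℝ} (hs1 : s = 1 ∨ s = -1)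
    (hs : ∀ t ∈ Icc (1 / 4 : ℝ) 4, c₁ ≤ s * iteratedDerivWithin 2 Q (Icc (1 / 4 : ℝ) 4) t)
    (hc₁ : 0 < c₁) {S : Set ℝ} {a : ℝ} (hS : S ⊆ Icc a (a + c₁ / 12)) :
    (∀ v ∈ S, ∀ t ∈ Icc (1 / 2 : ℝ) 2, c₁ / 12 ≤ |derivWithin Q (Icc (1 / 4 : ℝ) 4) t - v|) ∨
      ∀ v ∈ S, ∃ t ∈ Icc (1 / 3 : ℝ) (13 / 6), derivWithin Q (Icc (1 / 4 : ℝ) 4) t = v := by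
  set p := derivWithin Q (Icc (1 / 4 : ℝ) 4) with hp
  have hs0 : s ≠ 0 := by rcases hs1 with rfl | rfl <;> norm_num
  have hsabs : ∀ x : ℝ, |s * x| = |x| := fun x => by
    rcases hs1 with rfl | rfl <;> simp
  have hclose : ∀ v ∈ S, ∀ w ∈ S, |s * v - s * w| ≤ c₁ / 12 := by
    intro v hv w hw
    rw [← mul_sub, hsabs, abs_le]
    constructor <;> linarith [(hS hv).1, (hS hv).2, (hS hw).1, (hS hw).2]
  by_cases hall : ∀ v ∈ S, s * v ∈ Icc (s * p (1 / 3)) (s * p (13 / 6))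
  · refine Or.inr fun v hv => ?_
    have hcont : ContinuousOn (fun t => s * p t) (Icc (1 / 3 : ℝ) (13 / 6)) := fun t ht =>
      ((h.hasDerivAt_derivWithin hN ⟨by linarith [ht.1], by linarith [ht.2]⟩).const_mul
        s).continuousAt.continuousWithinAt
    obtain ⟨t, ht, htv⟩ := intermediate_value_Icc (by norm_num) hcont (hall v hv)
    exact ⟨t, ht, mul_left_cancel₀ hs0 htv⟩
  · left
    push Not at hall
    obtain ⟨w, hw, hwn⟩ := hall
    intro v hv t ht
    have hvw := abs_le.1 (hclose v hv w hw)
    have h13 := h.mul_sub_le_derivWithin_sub hN hs (x := 1 / 3) (y := t) (by norm_num)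
      ⟨by linarith [ht.1], by linarith [ht.2]⟩ (by linarith [ht.1])
    have h136 := h.mul_sub_le_derivWithin_sub hN hs (x := t) (y := 13 / 6)
      ⟨by linarith [ht.1], by linarith [ht.2]⟩ (by norm_num) (by linarith [ht.2])
    rw [← hp] at h13 h136
    rw [← hsabs, mul_sub]
    rw [mem_Icc, not_and_or, not_le, not_le] at hwn
    rcases hwn with hwn | hwn
    · exact le_trans (by nlinarith [ht.1]) (le_abs_self _)
    · exact le_trans (by nlinarith [ht.2]) (neg_le_abs _)

/-- A smooth choice of critical point. -/
lemma exists_criticalPoint (h : AdmissiblePhase N C₁ c₁ Q) (hN : 5 ≤ N) (hc₁ : 0 < c₁) {S : Set ℝ}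
    (hS : ∀ v ∈ S, ∃ t ∈ Icc (1 / 3 : ℝ) (13 / 6), derivWithin Q (Icc (1 / 4 : ℝ) 4) t = v) :
    ∃ T : ℝ × ℝ → ℝ,
      (∀ ξ η : ℝ, η ≠ 0 → -ξ / η ∈ S →
        T (ξ, η) ∈ Icc (1 / 3 : ℝ) (13 / 6) ∧
        derivWithin Q (Icc (1 / 4 : ℝ) 4) (T (ξ, η)) = -ξ / η ∧
        (∀ t' ∈ Icc (1 / 3 : ℝ) (13 / 6),
          derivWithin Q (Icc (1 / 4 : ℝ) 4) t' = -ξ / η → t' = T (ξ, η))) ∧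
      ContDiffOn ℝ (N - 1) T {p : ℝ × ℝ | p.2 ≠ 0 ∧ -p.1 / p.2 ∈ S} := by
  have hinj := h.injOn_derivWithin hN hc₁
  have hg := hinj.leftInvOn_invFunOn
  set g := Function.invFunOn (derivWithin Q (Icc (1 / 4 : ℝ) 4)) (Ioo (1 / 4 : ℝ) 4)
  have hsub : Icc (1 / 3 : ℝ) (13 / 6) ⊆ Ioo (1 / 4 : ℝ) 4 :=
    Icc_subset_Ioo (by norm_num) (by norm_num)
  refine ⟨fun p => g (-p.1 / p.2), fun ξ η _ hv => ?_, fun p hp => ?_⟩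
  · obtain ⟨t, ht, htv⟩ := hS _ hv
    simp only [← htv]
    rw [hg (hsub ht)]
    exact ⟨ht, rfl, fun t' ht' h' => hinj (hsub ht') (hsub ht) h'⟩
  · obtain ⟨hp2, hv⟩ := hp
    obtain ⟨t, ht, htv⟩ := hS _ hv
    have hgv := h.contDiffAt_leftInverse hN hc₁ hg (hsub ht)
    rw [htv] at hgv
    have hN1 : ((N : WithTop ℕ∞) - 1) = ((N - 1 : ℕ) : WithTop ℕ∞) := by norm_cast
    rw [hN1]
    exact (hgv.comp p (contDiffAt_fst.neg.div contDiffAt_snd hp2)).contDiffWithinAt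

end AdmissiblePhase

/-- Stationary-phase dichotomy for the oscillatory integral `I_Q`. -/
theorem stationary_phase_dichotomy
    (ρ : ℝ → ℝ) (hρ : ContDiff ℝ (⊤ : ℕ∞) ρ) (hρsupp : tsupport ρ ⊆ Set.Icc (1/2 : ℝ) 2)
    (A : ℝ) (hA : 1 < A) (N : ℕ) (hN : 5 ≤ N) (C₁ : ℝ) (hC₁ : 1 ≤ C₁) (c₁ : ℝ) (hc₁ : 0 < c₁)
    (χ : ℝ → ℝ) (hχ : ContDiff ℝ (⊤ : ℕ∞) χ) (hχc : HasCompactSupport χ)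
    (a : ℝ) (hχsupp : tsupport χ ⊆ Set.Icc a (a + c₁ / 12)) :
    ∃ B : ℝ, 0 < B ∧
      ∀ Q : ℝ → ℝ, ContDiffOn ℝ N Q (Set.Icc (1/4 : ℝ) 4) →
        (∀ k : ℕ, k ≤ N → ∀ t ∈ Set.Icc (1/4 : ℝ) 4,
          |iteratedDerivWithin k Q (Set.Icc (1/4 : ℝ) 4) t| ≤ C₁) →
        (∀ t ∈ Set.Icc (1/4 : ℝ) 4,
          c₁ ≤ |iteratedDerivWithin 2 Q (Set.Icc (1/4 : ℝ) 4) t|) →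
        -- alternative (1): the whole expression is `O(λ^{-(N-1)})`
        ((∀ lam ξ η : ℝ, 1 < lam → η ≠ 0 →
            ‖(χ (-ξ / η) : ℂ) * oscI ρ Q A lam ξ η‖ ≤ B * lam ^ (-((N : ℝ) - 1))) ∨
        -- alternative (2): a nondegenerate critical point exists and stationary phase applies
        (∃ T : ℝ × ℝ → ℝ,
          (∀ ξ η : ℝ, η ≠ 0 → -ξ / η ∈ tsupport χ →
            T (ξ, η) ∈ Set.Icc (1/3 : ℝ) (13/6) ∧
            derivWithin Q (Set.Icc (1/4 : ℝ) 4) (T (ξ, η)) = -ξ / η ∧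
            (∀ t' ∈ Set.Icc (1/3 : ℝ) (13/6),
              derivWithin Q (Set.Icc (1/4 : ℝ) 4) t' = -ξ / η → t' = T (ξ, η))) ∧
          ContDiffOn ℝ (N - 1) T {p : ℝ × ℝ | p.2 ≠ 0 ∧ -p.1 / p.2 ∈ tsupport χ} ∧
          ∃ s : ℝ, (s = 1 ∨ s = -1) ∧
            (∀ t ∈ Set.Icc (1/4 : ℝ) 4,
              0 < s * iteratedDerivWithin 2 Q (Set.Icc (1/4 : ℝ) 4) t) ∧
            ∀ lam ξ η : ℝ, 1 < lam → η ≠ 0 → -ξ / η ∈ tsupport χ →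
              ‖(χ (-ξ / η) : ℂ) * oscI ρ Q A lam ξ η -
                Complex.exp (Complex.I * s * π / 4) * (Real.sqrt (2 * π) : ℝ) *
                  (χ (-ξ / η) : ℝ) *
                  Set.indicator (Set.Icc (-A) A) (fun _ => (1 : ℂ)) (ξ / η) *
                  (ρ (T (ξ, η)) : ℝ) *
                  ((|iteratedDerivWithin 2 Q (Set.Icc (1/4 : ℝ) 4) (T (ξ, η))| ^
                      (-(1/2 : ℝ)) : ℝ)) *
                  Complex.exp (Complex.I * lam * phaseQ Q (T (ξ, η)) ξ η) *
                  (lam ^ (-(1/2 : ℝ)) : ℝ)‖ ≤ B * lam ^ (-(3/2 : ℝ)))) := by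
  obtain ⟨M, hM⟩ := hχc.exists_bound_of_continuous hχ.continuous
  have hM0 : 0 ≤ M := (norm_nonneg _).trans (hM 0)
  obtain ⟨B₁, hB₁0, hB₁⟩ :=
    exists_bound_of_nonstationary hρ hρsupp hN hC₁ hc₁ (|a| + c₁ / 12)
  obtain ⟨B₂, hB₂0, hB₂⟩ := exists_bound_of_stationary (C₁ := C₁) hρ hρsupp hN hc₁
  have hprod : ∀ (x y : ℝ) (z : ℂ) (b : ℝ), ‖z‖ ≤ b →
      ‖(χ x : ℂ) * (Set.indicator (Set.Icc (-A) A) (fun _ => (1 : ℂ)) y * z)‖ ≤ M * b := by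
    intro x y z b hz
    rw [norm_mul, norm_mul, Complex.norm_real]
    calc ‖χ x‖ * (‖Set.indicator (Set.Icc (-A) A) (fun _ => (1 : ℂ)) y‖ * ‖z‖)
        ≤ M * (1 * b) := by gcongr; exacts [hM x, norm_indicator_one_le _ _]
      _ = M * b := by rw [one_mul]
  refine ⟨M * B₁ + M * B₂ + 1, by positivity, fun Q hQ hQb hQl => ?_⟩
  have hadm : AdmissiblePhase N C₁ c₁ Q := ⟨hQ, hQb, hQl⟩
  obtain ⟨s, hs1, hs⟩ := hadm.exists_sign hN hc₁
  rcases hadm.dichotomy hN hs1 hs hc₁ hχsupp with hfar | hcrit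
  · left
    intro lam ξ η hlam _
    have hlam0 : 0 < lam := one_pos.trans hlam
    by_cases hv : -ξ / η ∈ tsupport χ
    · have hva : |-ξ / η| ≤ |a| + c₁ / 12 := by
        obtain ⟨h1, h2⟩ := hχsupp hv
        exact abs_le.2 ⟨by linarith [neg_abs_le a], by linarith [le_abs_self a]⟩
      have h := hprod (-ξ / η) (ξ / η) _ _ (hB₁ Q hadm _ hva (hfar _ hv) lam hlam)
      rw [← oscI_eq] at h
      have hpow : lam ^ (-((N : ℝ) - 1)) = (lam ^ (N - 1))⁻¹ := by
        rw [rpow_neg hlam0.le, ← rpow_natCast, Nat.cast_sub (by omega), Nat.cast_one]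
      rw [hpow]
      refine h.trans ?_
      rw [← mul_div_assoc, div_eq_mul_inv]
      gcongr
      nlinarith [mul_nonneg hM0 hB₂0]
    · rw [image_eq_zero_of_notMem_tsupport hv]
      simp only [Complex.ofReal_zero, zero_mul, norm_zero]
      positivity
  · right
    obtain ⟨T, hT, hTd⟩ := hadm.exists_criticalPoint hN hc₁ hcrit
    refine ⟨T, hT, hTd, s, hs1, fun t ht => hc₁.trans_le (hs t ht), fun lam ξ η hlam hη hv => ?_⟩
    have hlam0 : 0 < lam := one_pos.trans hlam
    obtain ⟨hTm, hTv, -⟩ := hT ξ η hη hv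
    have h := hprod (-ξ / η) (ξ / η) _ _ (hB₂ Q hadm s hs1 hs _ hTm _ hTv lam hlam)
    have hhalf : lam ^ (-(1 / 2 : ℝ)) = (√lam)⁻¹ := by rw [rpow_neg hlam0.le, sqrt_eq_rpow]
    have hthree : lam ^ (-(3 / 2 : ℝ)) = (lam * √lam)⁻¹ := by
      rw [rpow_neg hlam0.le, sqrt_eq_rpow, show (3 / 2 : ℝ) = 1 + 1 / 2 by norm_num,
        rpow_add hlam0, rpow_one]
    have hphase : phaseQ Q (T (ξ, η)) ξ η = Q (T (ξ, η)) - -ξ / η * T (ξ, η) := by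
      rw [phaseQ]; ring
    rw [oscI_eq, hhalf, hthree, hphase]
    calc _ = _ := by
          congr 1
          rw [Complex.ofReal_inv]
          ring
      _ ≤ _ := h
      _ ≤ _ := by
          rw [← mul_div_assoc, div_eq_mul_inv]
          gcongr
          nlinarith [mul_nonneg hM0 hB₁0]

end
end

section
/- Let 0 < A₁ < 1/2, 0 < c₀ < A₁/4, C₁ ≥ 1, c₁ > 0 and let N ≥ 5 be an integer. Let γ : ℝ → ℝ be N times continuously differentiable on (−A₁,A₁)∖{0} with γ′(t) ≠ 0 there, and set Q_ε(t) = γ(εt)/(ε γ′(ε)). Assume that for all 0 < |ε| < c₀ and all 1/4 ≤ |t| ≤ 4: |Q_ε^{(j)}(t)| ≤ C₁ for 0 ≤ j ≤ N and |Q_ε″(t)| ≥ c₁. Then there exist constants K₁, K₂ > 0 such that either |γ′(ε)| ≤ K₁ |ε|^{c₁} for all 0 < |ε| < c₀, or |γ′(ε)| ≥ K₂ |ε|^{−c₁} for all 0 < |ε| < c₀. -/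
open MeasureTheory Real Set

noncomputable section

/-- `Qc γ ε t = γ(εt)/(ε γ'(ε))`. -/
def Qc (γ : ℝ → ℝ) (ε t : ℝ) : ℝ := γ (ε * t) / (ε * deriv γ ε)

/-- The first derivative of `Qc γ ε`. -/
theorem deriv_Qc (γ : ℝ → ℝ) {ε : ℝ} (hε : ε ≠ 0) :
    deriv (Qc γ ε) = fun t => deriv γ (ε * t) / deriv γ ε := by
  funext t
  have h : Qc γ ε = fun t => γ (ε * t) / (ε * deriv γ ε) := rfl
  rw [h, deriv_div_const, deriv_comp_mul_left ε γ t, smul_eq_mul, mul_div_mul_left _ _ hε]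

/-- The second derivative of `Qc γ ε`. -/
theorem iteratedDeriv_two_Qc (γ : ℝ → ℝ) {ε : ℝ} (hε : ε ≠ 0) (t : ℝ) :
    iteratedDeriv 2 (Qc γ ε) t = ε * deriv (deriv γ) (ε * t) / deriv γ ε := by
  rw [iteratedDeriv_succ, iteratedDeriv_one, deriv_Qc γ hε, deriv_div_const,
    deriv_comp_mul_left ε (deriv γ) t, smul_eq_mul]

/-- A continuous function on `(0, b)` with `c ≤ x |φ x|`, `c > 0`, has constant sign there. -/
theorem sign_dichotomy_of_le_mul_abs {φ : ℝ → ℝ} {b c : ℝ} (hc : 0 < c)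
    (hφ : ContinuousOn φ (Ioo 0 b)) (hle : ∀ x ∈ Ioo 0 b, c ≤ |x * φ x|) :
    (∀ x ∈ Ioo 0 b, c / x ≤ φ x) ∨ (∀ x ∈ Ioo 0 b, φ x ≤ -(c / x)) := by
  have hne : ∀ x ∈ Ioo 0 b, φ x ≠ 0 := by
    intro x hx h0
    have := hle x hx
    simp only [h0, mul_zero, abs_zero] at this
    linarith
  have habs : ∀ x ∈ Ioo 0 b, c / x ≤ |φ x| := by
    intro x hx
    have := hle x hx
    rw [abs_mul, abs_of_pos hx.1] at this
    rw [div_le_iff₀ hx.1]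
    linarith
  have hsign : (∀ x ∈ Ioo 0 b, 0 < φ x) ∨ (∀ x ∈ Ioo 0 b, φ x < 0) := by
    by_contra! h
    obtain ⟨⟨x, hx, hx0⟩, y, hy, hy0⟩ := h
    obtain ⟨z, hz, hz0⟩ := isPreconnected_Ioo.intermediate_value hx hy hφ ⟨hx0, hy0⟩
    exact hne z hz hz0
  rcases hsign with h | h
  · left
    intro x hx
    simpa [abs_of_pos (h x hx)] using habs x hx
  · right
    intro x hx
    have := habs x hx
    rw [abs_of_neg (h x hx)] at this
    linarith

/-- If `c / x ≤ f' x` on `(0, b)`, then `f - c log` is at most its value at `b`. -/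
theorem sub_mul_log_le_of_div_le_deriv {f f' : ℝ → ℝ} {b c : ℝ}
    (hf : ∀ x ∈ Ioc 0 b, HasDerivAt f (f' x) x) (hle : ∀ x ∈ Ioo 0 b, c / x ≤ f' x)
    {x : ℝ} (hx : x ∈ Ioc 0 b) : f x - c * log x ≤ f b - c * log b := by
  have hd : ∀ y ∈ Ioc 0 b, HasDerivAt (fun z => f z - c * log z) (f' y - c * y⁻¹) y :=
    fun y hy => (hf y hy).sub ((hasDerivAt_log hy.1.ne').const_mul c)
  have hmono : MonotoneOn (fun z => f z - c * log z) (Ioc 0 b) := by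
    apply monotoneOn_of_deriv_nonneg (convex_Ioc 0 b)
    · exact fun y hy => (hd y hy).continuousAt.continuousWithinAt
    · intro y hy
      exact (hd y (interior_subset hy)).differentiableAt.differentiableWithinAt
    · intro y hy
      rw [(hd y (interior_subset hy)).deriv]
      rw [interior_Ioc] at hy
      have := hle y hy
      rw [div_eq_mul_inv] at this
      linarith
  exact hmono hx ⟨hx.1.trans_le hx.2, le_rfl⟩ hx.2

/-- footnote dichotomy: conditions (2.1)–(2.2) force `|γ′(ε)|` to be
either polynomially small or polynomially large as `ε → 0`. -/
theorem gamma_deriv_dichotomy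
    (A₁ c₀ C₁ c₁ : ℝ) (N : ℕ)
    (hA₁0 : 0 < A₁) (hA₁ : A₁ < 1/2) (hc₀0 : 0 < c₀) (hc₀ : c₀ < A₁ / 4)
    (hC₁ : 1 ≤ C₁) (hc₁ : 0 < c₁) (hN : 5 ≤ N)
    (γ : ℝ → ℝ)
    (hsmooth : ContDiffOn ℝ N γ (Set.Ioo (-A₁) A₁ \ {0}))
    (hderiv : ∀ t ∈ Set.Ioo (-A₁) A₁ \ {0}, deriv γ t ≠ 0)
    (hbound : ∀ ε t : ℝ, 0 < |ε| → |ε| < c₀ → 1/4 ≤ |t| → |t| ≤ 4 →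
      ∀ k : ℕ, k ≤ N → |iteratedDeriv k (Qc γ ε) t| ≤ C₁)
    (hlower : ∀ ε t : ℝ, 0 < |ε| → |ε| < c₀ → 1/4 ≤ |t| → |t| ≤ 4 →
      c₁ ≤ |iteratedDeriv 2 (Qc γ ε) t|) :
    ∃ K₁ K₂ : ℝ, 0 < K₁ ∧ 0 < K₂ ∧
      ((∀ ε : ℝ, 0 < |ε| → |ε| < c₀ → |deriv γ ε| ≤ K₁ * |ε| ^ c₁) ∨
       (∀ ε : ℝ, 0 < |ε| → |ε| < c₀ → K₂ * |ε| ^ (-c₁) ≤ |deriv γ ε|)) := by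
  have hS : IsOpen (Ioo (-A₁) A₁ \ {(0 : ℝ)}) := isOpen_Ioo.sdiff isClosed_singleton
  have hmem : ∀ x ∈ Ioc 0 c₀, x ∈ Ioo (-A₁) A₁ \ {(0 : ℝ)} := fun x hx =>
    ⟨⟨by linarith [hx.1], by linarith [hx.2]⟩, hx.1.ne'⟩
  have hγ2 : ContDiffOn ℝ 2 γ (Ioo (-A₁) A₁ \ {(0 : ℝ)}) :=
    hsmooth.of_le (by exact_mod_cast (by omega : 2 ≤ N))
  have hγ' : ContDiffOn ℝ 1 (deriv γ) (Ioo (-A₁) A₁ \ {(0 : ℝ)}) :=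
    hγ2.deriv_of_isOpen hS (by norm_num)
  have hγ'' : ContinuousOn (deriv (deriv γ)) (Ioo (-A₁) A₁ \ {(0 : ℝ)}) :=
    hγ'.continuousOn_deriv_of_isOpen hS le_rfl
  have hreflect : ∀ ε : ℝ, 0 < |ε| → |ε| < c₀ → |deriv γ (-ε)| ≤ C₁ * |deriv γ ε| := by
    intro ε h0 h1
    have hε : ε ≠ 0 := abs_pos.mp h0
    have hne : deriv γ ε ≠ 0 := hderiv ε
      ⟨⟨by linarith [neg_abs_le ε], by linarith [le_abs_self ε]⟩, hε⟩
    have h := hbound ε (-1) h0 h1 (by norm_num) (by norm_num) 1 (by omega)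
    rw [iteratedDeriv_one, deriv_Qc γ hε] at h
    beta_reduce at h
    rwa [mul_neg_one, abs_div, div_le_iff₀ (abs_pos.mpr hne)] at h
  have hlog : ∀ x ∈ Ioc 0 c₀,
      HasDerivAt (fun y => log (deriv γ y)) (deriv (deriv γ) x / deriv γ x) x := fun x hx =>
    ((hγ'.differentiableOn one_ne_zero).differentiableAt
      (hS.mem_nhds (hmem x hx))).hasDerivAt.log (hderiv x (hmem x hx))
  have hcont : ContinuousOn (fun x => deriv (deriv γ) x / deriv γ x) (Ioo 0 c₀) :=
    (hγ''.div hγ'.continuousOn hderiv).mono fun x hx => hmem x (Ioo_subset_Ioc_self hx)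
  have hratio : ∀ x ∈ Ioo 0 c₀, c₁ ≤ |x * (deriv (deriv γ) x / deriv γ x)| := by
    intro x hx
    have habs : |x| = x := abs_of_pos hx.1
    have h := hlower x 1 (by rw [habs]; exact hx.1) (by rw [habs]; exact hx.2)
      (by norm_num) (by norm_num)
    rwa [iteratedDeriv_two_Qc γ hx.1.ne', mul_one, mul_div_assoc] at h
  have hexp : ∀ x ∈ Ioc 0 c₀, exp (log (deriv γ x)) = |deriv γ x| := fun x hx =>
    exp_log_eq_abs (hderiv x (hmem x hx))
  have hC₁0 : 0 < C₁ := by linarith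
  rcases sign_dichotomy_of_le_mul_abs hc₁ hcont hratio with h | h
  · have hpos : ∀ x ∈ Ioc 0 c₀,
        |deriv γ x| ≤ exp (log (deriv γ c₀) - c₁ * log c₀) * x ^ c₁ := by
      intro x hx
      have := sub_mul_log_le_of_div_le_deriv hlog h hx
      rw [← hexp x hx, rpow_def_of_pos hx.1, ← exp_add, exp_le_exp]
      linarith
    refine ⟨C₁ * exp (log (deriv γ c₀) - c₁ * log c₀), 1, by positivity, one_pos,
      Or.inl fun ε h0 h1 => ?_⟩
    have hx := hpos (|ε|) ⟨h0, h1.le⟩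
    calc |deriv γ ε| ≤ C₁ * |deriv γ (|ε|)| := by
          rcases abs_choice ε with he | he
          · rw [he]
            exact le_mul_of_one_le_left (abs_nonneg _) hC₁
          · simpa [he] using hreflect (-ε) (by rwa [abs_neg]) (by rwa [abs_neg])
      _ ≤ C₁ * (exp (log (deriv γ c₀) - c₁ * log c₀) * |ε| ^ c₁) := by gcongr
      _ = _ := by ring
  · have hpos : ∀ x ∈ Ioc 0 c₀,
        exp (log (deriv γ c₀) + c₁ * log c₀) * x ^ (-c₁) ≤ |deriv γ x| := by
      intro x hx
      have := sub_mul_log_le_of_div_le_deriv (c := c₁) (fun y hy => (hlog y hy).neg)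
        (fun y hy => le_neg_of_le_neg (h y hy)) hx
      simp only [Pi.neg_apply] at this
      rw [← hexp x hx, rpow_def_of_pos hx.1, ← exp_add, exp_le_exp]
      linarith
    refine ⟨1, exp (log (deriv γ c₀) + c₁ * log c₀) / C₁, one_pos, by positivity,
      Or.inr fun ε h0 h1 => ?_⟩
    have hx := hpos (|ε|) ⟨h0, h1.le⟩
    rw [div_mul_eq_mul_div, div_le_iff₀ hC₁0, mul_comm |deriv γ ε|]
    refine hx.trans ?_
    rcases abs_choice ε with he | he
    · rw [he]
      exact le_mul_of_one_le_left (abs_nonneg _) hC₁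
    · rw [he]
      exact hreflect ε h0 h1

end
end
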